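/- arXiv:1908.04667 — 17 statements merged into one kernel-verified Lean document; each statement's English description precedes it below -/
import Mathlib

section
/- Let n ≥ 1, let β₁ < β₂ < ... < βₙ be real numbers and let x₁ < x₂ < ... < xₙ be real numbers. Then the n×n matrix whose (i,j) entry is exp(βⱼ·xᵢ) has strictly positive determinant. -/
/-- An exponential sum with `n` increasing exponents and `n` zeros is trivial. -/
theorem exp_sum_coeff_zero : ∀ (n : ℕ) (β x c : Fin n → ℝ), StrictMono β → StrictMono x →
    (∀ i, ∑ j, c j * Real.exp (β j * x i) = 0) → ∀ j, c j = 0 := by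
  intro n
  induction n with
  | zero => intro β x c _ _ _ j; exact j.elim0
  | succ n ih =>
    intro β x c hβ hx h
    let g : ℝ → ℝ := fun t => ∑ j, c j * Real.exp ((β j - β 0) * t)
    have hg : ∀ i, g (x i) = 0 := by
      intro i
      have : g (x i) = Real.exp (-β 0 * x i) * ∑ j, c j * Real.exp (β j * x i) := by
        simp only [g, Finset.mul_sum]
        refine Finset.sum_congr rfl fun j _ => ?_
        rw [show (β j - β 0) * x i = -β 0 * x i + β j * x i by ring, Real.exp_add]
        ring
      rw [this, h i, mul_zero]
    have hd : ∀ t, HasDerivAt g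
        (∑ j, c j * (Real.exp ((β j - β 0) * t) * (β j - β 0))) t := by
      intro t
      refine HasDerivAt.fun_sum fun j _ => ?_
      have h1 : HasDerivAt (fun t : ℝ => (β j - β 0) * t) (β j - β 0) t := by
        simpa using (hasDerivAt_id t).const_mul (β j - β 0)
      exact h1.exp.const_mul (c j)
    have hr : ∀ i : Fin n, ∃ y ∈ Set.Ioo (x i.castSucc) (x i.succ),
        ∑ j, c j * (Real.exp ((β j - β 0) * y) * (β j - β 0)) = 0 := by
      intro i
      exact exists_hasDerivAt_eq_zero (hx i.castSucc_lt_succ)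
        (fun t _ => (hd t).continuousAt.continuousWithinAt)
        (by rw [hg, hg]) (fun t _ => hd t)
    choose y hy hy0 using hr
    have hym : StrictMono y := by
      intro a b hab
      refine (hy a).2.trans_le (le_trans (hx.monotone ?_) (hy b).1.le)
      rw [Fin.le_def]
      simpa using hab
    have hc := ih (fun j => β j.succ - β 0) y (fun j => c j.succ * (β j.succ - β 0))
      (fun a b hab => sub_lt_sub_right (hβ (Fin.succ_lt_succ_iff.2 hab)) _) hym (by
        intro i
        have := hy0 i
        rw [Fin.sum_univ_succ] at this
        simp only [sub_self, mul_zero, zero_add] at this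
        rw [← this]
        exact Finset.sum_congr rfl fun j _ => by ring)
    have hs : ∀ j : Fin n, c j.succ = 0 := by
      intro j
      have h1 : β j.succ - β 0 ≠ 0 := (sub_pos.2 (hβ j.succ_pos)).ne'
      exact (mul_eq_zero.1 (hc j)).resolve_right h1
    have h0 : c 0 = 0 := by
      have := h 0
      rw [Fin.sum_univ_succ] at this
      simpa [hs] using this
    intro j
    exact Fin.cases h0 hs j

theorem exp_det_ne_zero (n : ℕ) (β x : Fin n → ℝ) (hβ : StrictMono β) (hx : StrictMono x) :
    (Matrix.of fun i j : Fin n => Real.exp (β j * x i)).det ≠ 0 := by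
  intro h
  obtain ⟨v, hv, hv0⟩ := Matrix.exists_mulVec_eq_zero_iff.2 h
  apply hv
  funext j
  refine exp_sum_coeff_zero n β x v hβ hx (fun i => ?_) j
  have := congrFun hv0 i
  simp only [Matrix.mulVec, dotProduct, Matrix.of_apply, Pi.zero_apply] at this
  rw [← this]
  exact Finset.sum_congr rfl fun j _ => mul_comm _ _

/-- Generalized Vandermonde positivity: if `β₁ < ... < βₙ` and `x₁ < ... < xₙ`,
then the matrix with entries `exp (βⱼ * xᵢ)` has strictly positive determinant. -/
theorem exp_vandermonde_det_pos (n : ℕ) (hn : 1 ≤ n) (β x : Fin n → ℝ)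
    (hβ : StrictMono β) (hx : StrictMono x) :
    0 < (Matrix.of fun i j : Fin n => Real.exp (β j * x i)).det := by
  let γ : ℝ → Fin n → ℝ := fun t j => (1 - t) * β j + t * ((j : ℕ) : ℝ)
  let D : ℝ → ℝ := fun t => (Matrix.of fun i j : Fin n => Real.exp (γ t j * x i)).det
  have hγ : ∀ t ∈ Set.Icc (0 : ℝ) 1, StrictMono (γ t) := by
    intro t ht a b hab
    have h1 := hβ hab
    have h2 : ((a : ℕ) : ℝ) < ((b : ℕ) : ℝ) := by exact_mod_cast hab
    simp only [γ]
    rcases eq_or_lt_of_le ht.1 with h | h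
    · subst h; simpa using h1
    · have h3 := mul_lt_mul_of_pos_left h2 h
      have h4 := mul_le_mul_of_nonneg_left h1.le (sub_nonneg.2 ht.2)
      linarith
  have hD : Continuous D := by
    refine Continuous.matrix_det ?_
    refine continuous_matrix fun i j => ?_
    simp only [Matrix.of_apply, γ]
    fun_prop
  have hD1 : 0 < D 1 := by
    have : D 1 = (Matrix.vandermonde fun i => Real.exp (x i)).det := by
      simp only [D]
      congr 1
      ext i j
      simp [γ, Matrix.vandermonde_apply, Real.exp_nat_mul]
    rw [this, Matrix.det_vandermonde]
    refine Finset.prod_pos fun i _ => Finset.prod_pos fun j hj => ?_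
    exact sub_pos.2 (Real.exp_lt_exp.2 (hx (Finset.mem_Ioi.1 hj)))
  have hD0 : 0 < D 0 := by
    by_contra hneg
    obtain ⟨t, ht, h0⟩ := intermediate_value_Icc (zero_le_one' ℝ) hD.continuousOn
      ⟨not_lt.1 hneg, hD1.le⟩
    exact exp_det_ne_zero n (γ t) x (hγ t ht) hx h0
  simpa [D, γ] using hD0
end

section
/- Define the kernel K : (0,∞) × (0,∞) → ℝ by K(x,y) = y/x² if y ≤ x and K(x,y) = 0 otherwise. Then K is totally positive: for every m ≥ 1 and all points 0 < x₁ < x₂ < ... < xₘ and 0 < y₁ < y₂ < ... < yₘ, the m×m matrix with entries K(xᵢ, yⱼ) has nonnegative determinant. -/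
theorem indicator_det_nonneg (m : ℕ) (x y : Fin m → ℝ)
    (hx : StrictMono x) (hy : StrictMono y) :
    0 ≤ (Matrix.of fun i j : Fin m => if y j ≤ x i then (1 : ℝ) else 0).det := by
  by_cases hd : (Matrix.of fun i j : Fin m => if y j ≤ x i then (1 : ℝ) else 0).det = 0
  · exact hd.ge
  have hex : ∀ i, ∃ f : Fin m, ∀ j, y j ≤ x i ↔ j ≤ f := by
    intro i
    have hne : (Finset.univ.filter fun j => y j ≤ x i).Nonempty := by
      by_contra hcon
      rw [Finset.not_nonempty_iff_eq_empty, Finset.filter_eq_empty_iff] at hcon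
      apply hd
      apply Matrix.det_eq_zero_of_row_eq_zero i
      intro j
      simp only [Matrix.of_apply]
      exact if_neg (hcon (Finset.mem_univ j))
    refine ⟨Finset.max' _ hne, fun j => ⟨fun h => Finset.le_max' _ _ (by simpa using h), fun h => ?_⟩⟩
    have h2 := Finset.max'_mem _ hne
    rw [Finset.mem_filter] at h2
    exact (hy.monotone h).trans h2.2
  choose f hf using hex
  have hmono : StrictMono f := by
    intro i k hik
    have hle : f i ≤ f k := (hf k _).1 (((hf i _).2 le_rfl).trans (hx hik).le)
    refine lt_of_le_of_ne hle fun heq => hd ?_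
    apply Matrix.det_zero_of_row_eq hik.ne
    funext j
    simp only [Matrix.of_apply, hf, heq]
  have hid : ∀ i, f i = i := fun i => le_antisymm (hmono.le_id i) (hmono.id_le i)
  rw [Matrix.det_of_lowerTriangular]
  · refine Finset.prod_nonneg fun i _ => ?_
    simp only [Matrix.of_apply]
    split_ifs <;> norm_num
  · intro i j hij
    have hij' : i < j := hij
    simp only [Matrix.of_apply, hf, hid]
    exact if_neg hij'.not_ge

/-- The kernel `K(x,y) = (y/x²)·𝟙{y ≤ x}` is totally positive on `(0,∞) × (0,∞)`. -/
theorem kernel_totally_positive (m : ℕ) (hm : 1 ≤ m) (x y : Fin m → ℝ)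
    (hx : StrictMono x) (hy : StrictMono y)
    (hx0 : ∀ i, 0 < x i) (hy0 : ∀ j, 0 < y j) :
    0 ≤ (Matrix.of fun i j : Fin m =>
      if y j ≤ x i then y j / (x i) ^ 2 else 0).det := by
  have key : (Matrix.of fun i j : Fin m => if y j ≤ x i then y j / (x i) ^ 2 else 0)
      = Matrix.diagonal (fun i => ((x i) ^ 2)⁻¹) *
        (Matrix.of fun i j : Fin m => if y j ≤ x i then (1 : ℝ) else 0) *
        Matrix.diagonal y := by
    ext i j
    rw [Matrix.mul_diagonal, Matrix.diagonal_mul]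
    simp only [Matrix.of_apply]
    split_ifs
    · rw [div_eq_mul_inv]; ring
    · simp
  rw [key, Matrix.det_mul, Matrix.det_mul, Matrix.det_diagonal, Matrix.det_diagonal]
  exact mul_nonneg (mul_nonneg (Finset.prod_nonneg fun i _ => by positivity)
    (indicator_det_nonneg m x y hx hy)) (Finset.prod_nonneg fun j _ => (hy0 j).le)
end

section
/- Let l : (0,∞) → ℝ be continuous and bounded, and define m(x) := x⁻² ∫₀ˣ y·l(y) dy for x > 0. Suppose there exist points 0 < x₁ < x₂ < ... < x_k and a sign ε ∈ {−1, 1} such that ε·(−1)^i·m(xᵢ) > 0 for every i = 1, ..., k (i.e., m takes nonzero values of alternating sign at the xᵢ, starting with sign ε·(−1)). Then there exist points 0 < y₁ < y₂ < ... < y_k such that ε·(−1)^i·l(yᵢ) > 0 for every i = 1, ..., k. -/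
open MeasureTheory intervalIntegral

/-- Variation-diminishing property: every alternating sign pattern of
`m(x) = x⁻² ∫₀ˣ y l(y) dy` at increasing positive points is also exhibited,
with the same signs, by `l` at some increasing positive points. -/
theorem variation_diminishing (l : ℝ → ℝ)
    (hcont : ContinuousOn l (Set.Ioi (0 : ℝ)))
    (hbdd : ∃ M : ℝ, ∀ x : ℝ, 0 < x → |l x| ≤ M)
    (k : ℕ) (x : Fin k → ℝ) (hx0 : ∀ i, 0 < x i) (hx : StrictMono x)
    (ε : ℝ) (hε : ε = 1 ∨ ε = -1)
    (hsign : ∀ i : Fin k,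
      0 < ε * (-1 : ℝ) ^ ((i : ℕ) + 1) *
        (((x i) ^ 2)⁻¹ * ∫ t in (0 : ℝ)..(x i), t * l t)) :
    ∃ y : Fin k → ℝ, (∀ i, 0 < y i) ∧ StrictMono y ∧
      ∀ i : Fin k, 0 < ε * (-1 : ℝ) ^ ((i : ℕ) + 1) * l (y i) := by
  classical
  have hF : ∀ i : Fin k, 0 < ε * (-1 : ℝ) ^ ((i : ℕ) + 1) * ∫ t in (0 : ℝ)..(x i), t * l t := by
    intro i
    have h := hsign i
    have hp : 0 < (x i) ^ 2 := pow_pos (hx0 i) 2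
    have h2 := mul_pos hp h
    have e : (x i) ^ 2 * (ε * (-1 : ℝ) ^ ((i : ℕ) + 1) *
        (((x i) ^ 2)⁻¹ * ∫ t in (0 : ℝ)..(x i), t * l t)) =
        ε * (-1 : ℝ) ^ ((i : ℕ) + 1) * ∫ t in (0 : ℝ)..(x i), t * l t := by
      have hne := (hx0 i).ne'
      field_simp
    rwa [e] at h2
  have hint : ∀ i : Fin k, IntervalIntegrable (fun t => t * l t) volume 0 (x i) := by
    intro i
    by_contra hn
    have h := hF i
    rw [intervalIntegral.integral_undef hn] at h
    simp at h
  have hneg : ∀ (c a b : ℝ), 0 ≤ a → a ≤ b → 0 < c * (∫ t in a..b, t * l t) →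
      ∃ y, a < y ∧ y ≤ b ∧ 0 < c * l y := by
    intro c a b ha hab hpos
    by_contra! hcon
    rw [← intervalIntegral.integral_const_mul, intervalIntegral.integral_of_le hab] at hpos
    have : ∫ t in Set.Ioc a b, c * (t * l t) ≤ 0 := by
      apply setIntegral_nonpos measurableSet_Ioc
      intro t ht
      have h1 := hcon t ht.1 ht.2
      have h2 : 0 < t := lt_of_le_of_lt ha ht.1
      nlinarith [mul_nonneg h2.le (neg_nonneg.mpr h1)]
    linarith
  have key : ∀ i : Fin k, ∃ a y : ℝ, 0 ≤ a ∧ (∀ j, j < i → x j ≤ a) ∧ a < y ∧ y ≤ x i ∧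
      0 < ε * (-1 : ℝ) ^ ((i : ℕ) + 1) * l y := by
    rintro ⟨n, hn⟩
    cases n with
    | zero =>
      obtain ⟨y, h1, h2, h3⟩ := hneg _ 0 (x ⟨0, hn⟩) le_rfl (hx0 _).le (hF ⟨0, hn⟩)
      refine ⟨0, y, le_rfl, ?_, h1, h2, h3⟩
      intro j hj
      exact absurd hj (by simp [Fin.lt_def])
    | succ n =>
      have hn' : n < k := by omega
      have hlt : x ⟨n, hn'⟩ < x ⟨n + 1, hn⟩ := hx (by simp [Fin.lt_def])
      have hsub := intervalIntegral.integral_interval_sub_left (hint ⟨n + 1, hn⟩) (hint ⟨n, hn'⟩)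
      have hp : 0 < ε * (-1 : ℝ) ^ (n + 1 + 1) *
          ∫ t in (x ⟨n, hn'⟩)..(x ⟨n + 1, hn⟩), t * l t := by
        rw [← hsub]
        have h1 := hF ⟨n, hn'⟩
        have h2 := hF ⟨n + 1, hn⟩
        simp only at h1 h2
        rw [pow_succ] at h2 ⊢
        linarith
      obtain ⟨y, h1, h2, h3⟩ := hneg _ _ _ (hx0 _).le hlt.le hp
      refine ⟨_, y, (hx0 _).le, ?_, h1, h2, h3⟩
      intro j hj
      apply hx.monotone
      rw [Fin.lt_def] at hj
      rw [Fin.le_def]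
      simp only at hj ⊢
      omega
  choose a y h0 h1 h2 h3 h4 using key
  refine ⟨y, fun i => (h0 i).trans_lt (h2 i), ?_, h4⟩
  intro i j hij
  exact ((h3 i).trans (h1 j i hij)).trans_lt (h2 j)
end

section
/- Let λ > 0, κ > 0, σ > 0 and θ, z ∈ ℝ, and define l : [0,∞) → ℝ by l(x) = (σ²κ²/λ)·e^{−2λx} + (κλ(θ − z) − σ²κ²/λ)·e^{−λx}. Then: (i) if z ≤ θ − σ²κ/λ², then l(x) > 0 for all x ≥ 0; (ii) if z ≥ θ, then l(0) ≤ 0 and l(x) < 0 for all x > 0; (iii) if θ − σ²κ/λ² < z < θ, then there exists a unique x* > 0 such that l(x) > 0 for 0 ≤ x < x*, l(x*) = 0, and l(x) < 0 for x > x*. -/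
/-- Classification of forward-curve shapes in the one-factor Vasicek model:
normal, inverse and humped, according to the position of the state `z`. -/
theorem vasicek_forward_shapes (lam kap sig th z : ℝ)
    (hlam : 0 < lam) (hkap : 0 < kap) (hsig : 0 < sig)
    (l : ℝ → ℝ)
    (hl : ∀ x : ℝ, l x = sig ^ 2 * kap ^ 2 / lam * Real.exp (-(2 * lam * x)) +
        (kap * lam * (th - z) - sig ^ 2 * kap ^ 2 / lam) * Real.exp (-(lam * x))) :
    (z ≤ th - sig ^ 2 * kap / lam ^ 2 → ∀ x : ℝ, 0 ≤ x → 0 < l x) ∧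
    (th ≤ z → l 0 ≤ 0 ∧ ∀ x : ℝ, 0 < x → l x < 0) ∧
    (th - sig ^ 2 * kap / lam ^ 2 < z → z < th →
      ∃! xs : ℝ, 0 < xs ∧ (∀ x : ℝ, 0 ≤ x → x < xs → 0 < l x) ∧ l xs = 0 ∧
        ∀ x : ℝ, xs < x → l x < 0) := by
  have hfac : ∀ x : ℝ, l x = Real.exp (-(lam * x)) *
      (sig ^ 2 * kap ^ 2 / lam * Real.exp (-(lam * x)) +
        (kap * lam * (th - z) - sig ^ 2 * kap ^ 2 / lam)) := by
    intro x
    have h2 : Real.exp (-(2 * lam * x)) = Real.exp (-(lam * x)) * Real.exp (-(lam * x)) := by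
      rw [← Real.exp_add]; congr 1; ring
    rw [hl, h2]; ring
  have hA : 0 < sig ^ 2 * kap ^ 2 / lam := by positivity
  have hAeq : sig ^ 2 * kap ^ 2 / lam = kap * lam * (sig ^ 2 * kap / lam ^ 2) := by
    field_simp
  have hkl : 0 < kap * lam := by positivity
  clear hl
  generalize sig ^ 2 * kap / lam ^ 2 = c at *
  generalize sig ^ 2 * kap ^ 2 / lam = A at *
  refine ⟨fun hz x _ => ?_, fun hz => ⟨?_, fun x hx => ?_⟩, fun hz1 hz2 => ?_⟩
  · rw [hfac]
    have hB : A ≤ kap * lam * (th - z) := by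
      rw [hAeq]; exact mul_le_mul_of_nonneg_left (by linarith) hkl.le
    have he := Real.exp_pos (-(lam * x))
    have := mul_pos hA he
    exact mul_pos he (by linarith)
  · rw [hfac]
    have hB : kap * lam * (th - z) ≤ 0 := mul_nonpos_of_nonneg_of_nonpos hkl.le (by linarith)
    simp only [mul_zero, neg_zero, Real.exp_zero]
    linarith
  · rw [hfac]
    have hB : kap * lam * (th - z) ≤ 0 := mul_nonpos_of_nonneg_of_nonpos hkl.le (by linarith)
    have he := Real.exp_pos (-(lam * x))
    have h1 : Real.exp (-(lam * x)) < 1 := by rw [← Real.exp_zero]; exact Real.exp_lt_exp.2 (by nlinarith [mul_pos hlam hx])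
    have := mul_lt_mul_of_pos_left h1 hA
    exact mul_neg_of_pos_of_neg he (by linarith)
  · have hB0 : 0 < kap * lam * (th - z) := mul_pos hkl (by linarith)
    have hBA : kap * lam * (th - z) < A := by
      rw [hAeq]; exact mul_lt_mul_of_pos_left (by linarith) hkl
    generalize kap * lam * (th - z) = B at *
    have hr : 0 < (A - B) / A := div_pos (by linarith) hA
    have hr1 : (A - B) / A < 1 := (div_lt_one hA).2 (by linarith)
    obtain ⟨xs, hxs⟩ : ∃ xs : ℝ, -(lam * xs) = Real.log ((A - B) / A) :=
      ⟨-Real.log ((A - B) / A) / lam, by field_simp⟩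
    have hexp : A * Real.exp (-(lam * xs)) = A - B := by
      rw [hxs, Real.exp_log hr]; field_simp
    have hpos : 0 < xs := by
      have := Real.log_neg hr hr1
      by_contra h
      nlinarith [mul_nonneg hlam.le (neg_nonneg.2 (not_lt.1 h))]
    refine ⟨xs, ⟨hpos, fun x _ hx => ?_, ?_, fun x hx => ?_⟩, ?_⟩
    · rw [hfac]
      have h1 : Real.exp (-(lam * xs)) < Real.exp (-(lam * x)) :=
        Real.exp_lt_exp.2 (neg_lt_neg (mul_lt_mul_of_pos_left hx hlam))
      have := mul_lt_mul_of_pos_left h1 hA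
      exact mul_pos (Real.exp_pos _) (by linarith)
    · rw [hfac, hexp]; ring
    · rw [hfac]
      have h1 : Real.exp (-(lam * x)) < Real.exp (-(lam * xs)) :=
        Real.exp_lt_exp.2 (neg_lt_neg (mul_lt_mul_of_pos_left hx hlam))
      have := mul_lt_mul_of_pos_left h1 hA
      exact mul_neg_of_pos_of_neg (Real.exp_pos _) (by linarith)
    · rintro y ⟨_, _, hy0, _⟩
      rw [hfac] at hy0
      have h0 := (mul_eq_zero.1 hy0).resolve_left (Real.exp_pos _).ne'
      have h1 : Real.exp (-(lam * y)) = Real.exp (-(lam * xs)) :=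
        mul_left_cancel₀ hA.ne' (by linarith)
      have h2 := Real.exp_injective h1
      exact mul_left_cancel₀ hlam.ne' (by linarith)
end

section
/- Let λ > 0, κ > 0, σ > 0 and θ, z ∈ ℝ, let l(x) = (σ²κ²/λ)·e^{−2λx} + (κλ(θ − z) − σ²κ²/λ)·e^{−λx}, and define m(x) := x⁻² ∫₀ˣ y·l(y) dy for x > 0. Then: (i) if z ≤ θ − 3σ²κ/(4λ²), then m(x) > 0 for all x > 0; (ii) if z ≥ θ, then m(x) < 0 for all x > 0; (iii) if θ − 3σ²κ/(4λ²) < z < θ, then there exists a unique x* > 0 such that m(x) > 0 for 0 < x < x*, m(x*) = 0, and m(x) < 0 for x > x*. -/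
open MeasureTheory intervalIntegral

theorem vas_deriv (lam A B : ℝ) (hlam : 0 < lam) (x : ℝ) :
    HasDerivAt (fun x : ℝ => A / (4 * lam ^ 2) * (1 - (1 + 2 * lam * x) * Real.exp (-(2 * lam * x)))
      + B / lam ^ 2 * (1 - (1 + lam * x) * Real.exp (-(lam * x))))
      (x * (A * Real.exp (-(2 * lam * x)) + B * Real.exp (-(lam * x)))) x := by
  have h (c : ℝ) : HasDerivAt (fun x : ℝ => 1 - (1 + c * x) * Real.exp (-(c * x)))
      (c ^ 2 * x * Real.exp (-(c * x))) x := by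
    have h1 : HasDerivAt (fun x : ℝ => c * x) c x := by
      simpa using (hasDerivAt_id x).const_mul c
    have h2 := ((h1.const_add 1).mul h1.neg.exp).const_sub 1
    refine h2.congr_deriv ?_
    simp only [Pi.neg_apply]
    ring
  have := ((h (2 * lam)).const_mul (A / (4 * lam ^ 2))).add ((h lam).const_mul (B / lam ^ 2))
  refine this.congr_deriv ?_
  field_simp
  ring

theorem vas_exp2 (a x : ℝ) : Real.exp (-(2 * a * x)) = Real.exp (-(a * x)) ^ 2 := by
  rw [← Real.exp_nat_mul]; congr 1; push_cast; ring

theorem vas_lt_one (u : ℝ) (hu : 0 < u) : (1 + u) * Real.exp (-u) < 1 := by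
  have h := Real.add_one_lt_exp hu.ne'
  have h2 : Real.exp u * Real.exp (-u) = 1 := by rw [← Real.exp_add]; simp
  nlinarith [Real.exp_pos (-u)]

theorem vas_lt_two (u : ℝ) (hu : 0 < u) :
    (1 + 2 * u) * Real.exp (-u) ^ 2 < (1 + u) * Real.exp (-u) := by
  have h := vas_lt_one u hu
  have hE := Real.exp_pos (-u)
  have h1 : (1 + 2 * u) * Real.exp (-u) < 1 + u := by nlinarith
  nlinarith

theorem vas_lim (lam A B : ℝ) (hlam : 0 < lam) (hA : 0 < A) (hAB : A / 4 + B < 0) (x0 : ℝ) :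
    ∃ X, x0 < X ∧ A / (4 * lam ^ 2) * (1 - (1 + 2 * lam * X) * Real.exp (-(2 * lam * X)))
      + B / lam ^ 2 * (1 - (1 + lam * X) * Real.exp (-(lam * X))) < 0 := by
  have h (c : ℝ) (hc : 0 < c) : Filter.Tendsto (fun x : ℝ => (1 + c * x) * Real.exp (-(c * x)))
      Filter.atTop (nhds 0) := by
    have h0 := Real.tendsto_pow_mul_exp_neg_atTop_nhds_zero 0
    have h1 := Real.tendsto_pow_mul_exp_neg_atTop_nhds_zero 1
    have h2 := (h0.add h1).comp (Filter.tendsto_id.const_mul_atTop hc)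
    rw [add_zero] at h2
    refine h2.congr fun x => ?_
    simp
    ring
  have h3 := (((h (2 * lam) (by positivity)).const_sub 1).const_mul (A / (4 * lam ^ 2))).add
    (((h lam hlam).const_sub 1).const_mul (B / lam ^ 2))
  have h4 : A / (4 * lam ^ 2) * (1 - 0) + B / lam ^ 2 * (1 - 0) < 0 := by
    have : A / (4 * lam ^ 2) * (1 - 0) + B / lam ^ 2 * (1 - 0) = (A / 4 + B) / lam ^ 2 := by
      field_simp
      ring
    rw [this]
    exact div_neg_of_neg_of_pos hAB (by positivity)
  obtain ⟨X, hX, hX'⟩ := ((h3.eventually_lt_const h4).and (Filter.eventually_gt_atTop x0)).exists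
  exact ⟨X, hX', hX⟩

/-- Classification of yield-curve shapes in the one-factor Vasicek model:
normal, inverse and humped, according to the position of the state `z`. -/
theorem vasicek_yield_shapes (lam kap sig th z : ℝ)
    (hlam : 0 < lam) (hkap : 0 < kap) (hsig : 0 < sig)
    (l m : ℝ → ℝ)
    (hl : ∀ x : ℝ, l x = sig ^ 2 * kap ^ 2 / lam * Real.exp (-(2 * lam * x)) +
        (kap * lam * (th - z) - sig ^ 2 * kap ^ 2 / lam) * Real.exp (-(lam * x)))
    (hm : ∀ x : ℝ, 0 < x → m x = (x ^ 2)⁻¹ * ∫ t in (0 : ℝ)..x, t * l t) :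
    (z ≤ th - 3 * sig ^ 2 * kap / (4 * lam ^ 2) → ∀ x : ℝ, 0 < x → 0 < m x) ∧
    (th ≤ z → ∀ x : ℝ, 0 < x → m x < 0) ∧
    (th - 3 * sig ^ 2 * kap / (4 * lam ^ 2) < z → z < th →
      ∃! xs : ℝ, 0 < xs ∧ (∀ x : ℝ, 0 < x → x < xs → 0 < m x) ∧ m xs = 0 ∧
        ∀ x : ℝ, xs < x → m x < 0) := by
  set A := sig ^ 2 * kap ^ 2 / lam with hA
  set B := kap * lam * (th - z) - A with hB
  have hA0 : 0 < A := by positivity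
  set G : ℝ → ℝ := fun x : ℝ =>
    A / (4 * lam ^ 2) * (1 - (1 + 2 * lam * x) * Real.exp (-(2 * lam * x)))
      + B / lam ^ 2 * (1 - (1 + lam * x) * Real.exp (-(lam * x))) with hG
  have hd : ∀ x, HasDerivAt G (x * l x) x := fun x => by
    rw [hl]; exact vas_deriv lam A B hlam x
  have hlc : Continuous l := by
    rw [funext hl]; fun_prop
  have hG0 : G 0 = 0 := by simp [hG]
  have hGc : Continuous G := continuous_iff_continuousAt.2 fun x => (hd x).continuousAt
  have hmG : ∀ x, 0 < x → m x = (x ^ 2)⁻¹ * G x := fun x hx => by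
    rw [hm x hx, integral_eq_sub_of_hasDerivAt (fun t _ => hd t)
      ((continuous_id.mul hlc).intervalIntegrable _ _), hG0, sub_zero]
  have hpos : ∀ x, 0 < x → 0 < G x → 0 < m x := fun x hx h => by
    rw [hmG x hx]; positivity
  have hneg : ∀ x, 0 < x → G x < 0 → m x < 0 := fun x hx h => by
    rw [hmG x hx]; exact mul_neg_of_pos_of_neg (by positivity) h
  have hl' : ∀ x, l x = Real.exp (-(lam * x)) * (A * Real.exp (-(lam * x)) + B) := fun x => by
    rw [hl, vas_exp2]; ring
  have hkey : A / 4 + B = kap * lam * (th - 3 * sig ^ 2 * kap / (4 * lam ^ 2) - z) := by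
    rw [hB, hA]; field_simp; ring
  have hkl : 0 < kap * lam := by positivity
  refine ⟨fun hz x hx => hpos x hx ?_, fun hz x hx => hneg x hx ?_, fun hz1 hz2 => ?_⟩
  · have hAB : 0 ≤ A / 4 + B := by
      rw [hkey]; exact mul_nonneg hkl.le (by linarith)
    have hu : 0 < lam * x := by positivity
    have h1 := vas_lt_one _ hu
    have h2 := vas_lt_two _ hu
    have : G x = (A / 4 * ((1 + lam * x) * Real.exp (-(lam * x))
        - (1 + 2 * (lam * x)) * Real.exp (-(lam * x)) ^ 2)
        + (A / 4 + B) * (1 - (1 + lam * x) * Real.exp (-(lam * x)))) / lam ^ 2 := by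
      simp only [hG]
      rw [vas_exp2]; field_simp; ring
    rw [this]
    apply div_pos _ (by positivity)
    have h3 := mul_pos (show 0 < A / 4 by positivity) (sub_pos.2 h2)
    have h4 := mul_nonneg hAB (sub_pos.2 h1).le
    linarith
  · have hAB : A + B ≤ 0 := by
      have : A + B = kap * lam * (th - z) := by rw [hB]; ring
      rw [this]; exact mul_nonpos_of_nonneg_of_nonpos hkl.le (by linarith)
    have hanti : StrictAntiOn G (Set.Ici 0) := by
      apply strictAntiOn_of_deriv_neg (convex_Ici 0) hGc.continuousOn
      intro y hy
      rw [interior_Ici, Set.mem_Ioi] at hy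
      rw [(hd y).deriv, hl']
      have : Real.exp (-(lam * y)) < 1 := by
        rw [Real.exp_lt_one_iff]; nlinarith
      refine mul_neg_of_pos_of_neg hy (mul_neg_of_pos_of_neg (Real.exp_pos _) ?_)
      nlinarith
    have := hanti (Set.mem_Ici.2 le_rfl) (Set.mem_Ici.2 hx.le) hx
    rwa [hG0] at this
  · have hAB : A / 4 + B < 0 := by
      rw [hkey]; exact mul_neg_of_pos_of_neg hkl (by linarith)
    have hAB' : 0 < A + B := by
      have : A + B = kap * lam * (th - z) := by rw [hB]; ring
      rw [this]; exact mul_pos hkl (by linarith)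
    have hB0 : B < 0 := by linarith
    set x0 := Real.log (A / (-B)) / lam with hx0
    have hq : 1 < A / (-B) := by rw [one_lt_div (by linarith)]; linarith
    have hx0p : 0 < x0 := div_pos (Real.log_pos hq) hlam
    have he : A * Real.exp (-(lam * x0)) + B = 0 := by
      have : lam * x0 = Real.log (A / (-B)) := by rw [hx0]; field_simp
      rw [this, Real.exp_neg, Real.exp_log (by linarith)]
      field_simp
      ring
    have hmono : StrictMonoOn G (Set.Icc 0 x0) := by
      apply strictMonoOn_of_deriv_pos (convex_Icc 0 x0) hGc.continuousOn
      intro y hy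
      rw [interior_Icc] at hy
      rw [(hd y).deriv, hl']
      have : Real.exp (-(lam * x0)) < Real.exp (-(lam * y)) :=
        Real.exp_lt_exp.2 (by nlinarith [hy.2])
      refine mul_pos hy.1 (mul_pos (Real.exp_pos _) ?_)
      nlinarith
    have hanti : StrictAntiOn G (Set.Ici x0) := by
      apply strictAntiOn_of_deriv_neg (convex_Ici x0) hGc.continuousOn
      intro y hy
      rw [interior_Ici, Set.mem_Ioi] at hy
      rw [(hd y).deriv, hl']
      have : Real.exp (-(lam * y)) < Real.exp (-(lam * x0)) :=
        Real.exp_lt_exp.2 (by nlinarith)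
      refine mul_neg_of_pos_of_neg (hx0p.trans hy) (mul_neg_of_pos_of_neg (Real.exp_pos _) ?_)
      nlinarith
    have hGpos : ∀ x, 0 < x → x ≤ x0 → 0 < G x := fun x h1 h2 => by
      have := hmono ⟨le_rfl, hx0p.le⟩ ⟨h1.le, h2⟩ h1
      rwa [hG0] at this
    obtain ⟨X, hX, hGX⟩ := vas_lim lam A B hlam hA0 hAB x0
    obtain ⟨xs, hxs, hGxs⟩ := intermediate_value_Icc' hX.le hGc.continuousOn
      (show (0 : ℝ) ∈ Set.Icc (G X) (G x0) from ⟨hGX.le, (hGpos x0 hx0p le_rfl).le⟩)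
    have hxsp : 0 < xs := hx0p.trans_le hxs.1
    refine ⟨xs, ⟨hxsp, fun x h1 h2 => hpos x h1 ?_, ?_, fun x h => hneg x (hxsp.trans h) ?_⟩, ?_⟩
    · rcases le_total x x0 with h | h
      · exact hGpos x h1 h
      · have := hanti (Set.mem_Ici.2 h) (Set.mem_Ici.2 hxs.1) h2
        rwa [hGxs] at this
    · rw [hmG xs hxsp, hGxs, mul_zero]
    · have := hanti (Set.mem_Ici.2 hxs.1) (Set.mem_Ici.2 (hxs.1.trans h.le)) h
      rwa [hGxs] at this
    · rintro y ⟨hy, hy1, hy2, hy3⟩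
      have hxs0 : m xs = 0 := by rw [hmG xs hxsp, hGxs, mul_zero]
      rcases lt_trichotomy y xs with h | h | h
      · exact absurd hxs0 (hy3 xs h).ne
      · exact h
      · exact absurd hxs0 (hy1 xs hxsp h).ne'
end

section
/- Let n ≥ 2, let γ₁ < γ₂ < ... < γₙ be real numbers and let r₁ < r₂ < ... < r_{n−1} be real numbers. Then there exist nonzero coefficients a₁, ..., aₙ with aᵢ·aᵢ₊₁ < 0 for every i = 1, ..., n−1 (alternating signs) such that the function φ(x) = Σᵢ aᵢ·e^{γᵢ x} satisfies: φ(rᵢ) = 0 for every i; φ(x) ≠ 0 for all x ∉ {r₁, ..., r_{n−1}}; and φ changes sign strictly at each rᵢ, i.e., φ has constant nonzero sign on each of the n open intervals determined by r₁ < ... < r_{n−1}, with opposite signs on adjacent intervals. -/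
open Finset

theorem expsum_zero (m : ℕ) : ∀ (γ : Fin m → ℝ) (_ : StrictMono γ) (x : Fin m → ℝ)
    (_ : StrictMono x) (a : Fin m → ℝ) (_ : ∀ i, ∑ k, a k * Real.exp (γ k * x i) = 0),
    a = 0 := by
  induction m with
  | zero => intro γ _ x _ a _; ext i; exact i.elim0
  | succ m ih =>
    intro γ hγ x hx a h
    let g : ℝ → ℝ := fun t => ∑ k, a k * Real.exp ((γ k - γ 0) * t)
    have hg : ∀ i, g (x i) = 0 := by
      intro i
      have : g (x i) = Real.exp (-γ 0 * x i) * ∑ k, a k * Real.exp (γ k * x i) := by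
        simp only [g, Finset.mul_sum]
        refine Finset.sum_congr rfl fun k _ => ?_
        rw [mul_left_comm, ← Real.exp_add]
        congr 2; ring
      rw [this, h, mul_zero]
    have hd : ∀ t, HasDerivAt g (∑ k, a k * (Real.exp ((γ k - γ 0) * t) * (γ k - γ 0))) t := by
      intro t
      refine HasDerivAt.fun_sum fun k _ => ?_
      refine HasDerivAt.const_mul _ ?_
      refine HasDerivAt.exp ?_
      simpa using (hasDerivAt_id t).const_mul (γ k - γ 0)
    have hy : ∀ i : Fin m, ∃ y, x i.castSucc < y ∧ y < x i.succ ∧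
        ∑ k, a k * (Real.exp ((γ k - γ 0) * y) * (γ k - γ 0)) = 0 := by
      intro i
      obtain ⟨y, hy, h0⟩ := exists_hasDerivAt_eq_zero (f := g)
        (hx (Fin.castSucc_lt_succ (i := i)))
        (fun t _ => (hd t).continuousAt.continuousWithinAt) (by rw [hg, hg]) (fun t _ => hd t)
      exact ⟨y, hy.1, hy.2, h0⟩
    choose y hy1 hy2 hy3 using hy
    have hym : StrictMono y := by
      intro i j hij
      have : x i.succ ≤ x j.castSucc := hx.monotone (by
        rw [Fin.le_def]; simp only [Fin.val_succ, Fin.val_castSucc]; exact hij)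
      linarith [hy2 i, hy1 j]
    have := ih (fun k => γ k.succ - γ 0)
      (fun i j hij => by
        have := hγ (Fin.succ_lt_succ_iff.2 hij)
        simpa using this) y hym
      (fun k => a k.succ * (γ k.succ - γ 0)) (by
        intro i
        have := hy3 i
        rw [Fin.sum_univ_succ] at this
        simp only [sub_self, mul_zero, zero_add] at this
        rw [← this]
        refine Finset.sum_congr rfl fun k _ => ?_
        ring)
    have hs : ∀ k : Fin m, a k.succ = 0 := by
      intro k
      have h1 := congrFun this k
      simp only [Pi.zero_apply, mul_eq_zero] at h1
      rcases h1 with h1 | h1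
      · exact h1
      · have := hγ (Fin.succ_pos k); linarith
    have h0 : a 0 = 0 := by
      have := h 0
      rw [Fin.sum_univ_succ] at this
      simpa [hs] using this
    ext k
    refine Fin.cases ?_ ?_ k
    · exact h0
    · exact hs

theorem det_ne (m : ℕ) (γ x : Fin m → ℝ) (hγ : StrictMono γ) (hx : StrictMono x) :
    (Matrix.of fun i j => Real.exp (γ j * x i)).det ≠ 0 := by
  intro h
  obtain ⟨v, hv, h0⟩ := Matrix.exists_mulVec_eq_zero_iff.2 h
  refine hv (expsum_zero m γ hγ x hx v fun i => ?_)
  have := congrFun h0 i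
  simp only [Matrix.mulVec, dotProduct, Matrix.of_apply, Pi.zero_apply] at this
  rw [← this]
  exact Finset.sum_congr rfl fun k _ => mul_comm _ _

theorem det_pos' (m : ℕ) (γ x : Fin m → ℝ) (hγ : StrictMono γ) (hx : StrictMono x) :
    0 < (Matrix.of fun i j => Real.exp (γ j * x i)).det := by
  let D : ℝ → ℝ := fun t =>
    (Matrix.of fun i j : Fin m => Real.exp (((1 - t) * γ j + t * (j : ℕ)) * x i)).det
  have hc : Continuous D := by
    refine Continuous.matrix_det ?_
    refine continuous_matrix fun i j => ?_
    simp only [Matrix.of_apply]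
    fun_prop
  have hne : ∀ t ∈ Set.Icc (0:ℝ) 1, D t ≠ 0 := by
    intro t ht
    refine det_ne m (fun j => (1 - t) * γ j + t * (j : ℕ)) x ?_ hx
    intro i j hij
    have h1 := hγ hij
    have h2 : ((i : ℕ) : ℝ) < (j : ℕ) := by exact_mod_cast hij
    obtain ⟨h3, h4⟩ := ht
    show (1 - t) * γ i + t * (i : ℕ) < (1 - t) * γ j + t * (j : ℕ)
    rcases h3.eq_or_lt with h | h
    · subst h; simpa using h1
    · nlinarith [mul_pos h (sub_pos.2 h2), mul_nonneg (sub_nonneg.2 h4) (sub_pos.2 h1).le]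
  have h1 : 0 < D 1 := by
    have : D 1 = (Matrix.vandermonde fun i => Real.exp (x i)).det := by
      simp only [D]
      congr 1
      ext i j
      simp [Matrix.vandermonde_apply, ← Real.exp_nat_mul]
    rw [this, Matrix.det_vandermonde]
    refine Finset.prod_pos fun i _ => Finset.prod_pos fun j hj => ?_
    have := hx (Finset.mem_Ioi.1 hj)
    have := Real.exp_lt_exp.2 this
    linarith
  have h0 : D 0 = (Matrix.of fun i j => Real.exp (γ j * x i)).det := by simp [D]
  rw [← h0]
  by_contra hcon
  obtain ⟨t, ht, hz⟩ := intermediate_value_Icc (zero_le_one' ℝ) hc.continuousOn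
    ⟨not_lt.1 hcon, h1.le⟩
  exact hne t ht hz

theorem expand (m : ℕ) (γ : Fin (m+1) → ℝ) (r : Fin m → ℝ) (p : Fin (m+1)) (x : ℝ) :
    (Matrix.of fun i j => Real.exp (γ j * (p.insertNth x r : Fin (m+1) → ℝ) i)).det =
    (-1) ^ (p : ℕ) * ∑ k : Fin (m+1), ((-1) ^ (k : ℕ) *
      (Matrix.of fun i j => Real.exp (γ (k.succAbove j) * r i)).det) * Real.exp (γ k * x) := by
  rw [Matrix.det_succ_row _ p, Finset.mul_sum]
  refine Finset.sum_congr rfl fun k _ => ?_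
  have : (Matrix.of fun i j => Real.exp (γ j * (p.insertNth x r : Fin (m+1) → ℝ) i)).submatrix
      p.succAbove k.succAbove = Matrix.of fun i j => Real.exp (γ (k.succAbove j) * r i) := by
    ext i j; simp
  rw [this]
  simp only [Matrix.of_apply, Fin.insertNth_apply_same, pow_add]
  ring

theorem interp_aux (m : ℕ) (γ : Fin (m+1) → ℝ) (hγ : StrictMono γ)
    (r : Fin m → ℝ) (hr : StrictMono r) :
    ∃ a : Fin (m+1) → ℝ,
      (∀ i, a i ≠ 0) ∧
      (∀ i j : Fin (m+1), (j : ℕ) = (i : ℕ) + 1 → a i * a j < 0) ∧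
      (∀ i : Fin m, (∑ k, a k * Real.exp (γ k * r i)) = 0) ∧
      ∃ ε : ℝ, (ε = 1 ∨ ε = -1) ∧
        ∀ x : ℝ, x ∉ Set.range r →
          0 < ε * (-1 : ℝ) ^ ((univ.filter fun i => r i < x).card) *
            (∑ k, a k * Real.exp (γ k * x)) := by
  have hpos : ∀ k : Fin (m+1),
      0 < (Matrix.of fun i j => Real.exp (γ (k.succAbove j) * r i)).det := fun k =>
    det_pos' m (fun j => γ (k.succAbove j)) r (hγ.comp (Fin.strictMono_succAbove k)) hr
  refine ⟨fun k => (-1) ^ (k : ℕ) *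
      (Matrix.of fun i j => Real.exp (γ (k.succAbove j) * r i)).det, ?_, ?_, ?_, 1, Or.inl rfl, ?_⟩
  · intro i
    exact mul_ne_zero (pow_ne_zero _ (by norm_num)) (hpos i).ne'
  · intro i j hij
    have h := mul_pos (hpos i) (hpos j)
    have h2 : ((-1 : ℝ) ^ (i : ℕ)) * (-1) ^ (j : ℕ) = -1 := by
      rw [hij, pow_succ, ← mul_assoc, ← mul_pow]; norm_num
    simp only []
    rw [mul_mul_mul_comm, h2]
    linarith
  · intro i
    have := expand m γ r 0 (r i)
    simp only [Fin.val_zero, pow_zero, one_mul] at this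
    rw [← this]
    refine Matrix.det_zero_of_row_eq (i := 0) (j := i.succ) (Fin.succ_ne_zero i).symm ?_
    ext j
    simp [Fin.insertNth_zero]
  · intro x hx
    have hcard : (univ.filter fun i => r i < x).card < m + 1 := by
      have := Finset.card_le_univ (univ.filter fun i => r i < x)
      simp only [Fintype.card_fin] at this
      omega
    set c := (univ.filter fun i => r i < x).card with hcdef
    have key : ∀ i : Fin m, r i < x ↔ (i : ℕ) < c := by
      intro i
      constructor
      · intro h
        have : (Finset.Iic i).card ≤ c := Finset.card_le_card (by
          intro j hj
          simp only [Finset.mem_filter, Finset.mem_univ, true_and]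
          exact (hr.monotone (Finset.mem_Iic.1 hj)).trans_lt h)
        rw [Fin.card_Iic] at this
        omega
      · intro h
        by_contra hcon
        have : c ≤ (Finset.Iio i).card := Finset.card_le_card (by
          intro j hj
          simp only [Finset.mem_filter, Finset.mem_univ, true_and] at hj
          rw [Finset.mem_Iio]
          exact hr.lt_iff_lt.1 (hj.trans_le (not_lt.1 hcon)))
        rw [Fin.card_Iio] at this
        omega
    have hmono : StrictMono (Fin.insertNth (α := fun _ => ℝ) (⟨c, hcard⟩ : Fin (m+1)) x r) := by
      intro i j hij
      induction i using Fin.succAboveCases (⟨c, hcard⟩ : Fin (m+1)) with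
      | x =>
        induction j using Fin.succAboveCases (⟨c, hcard⟩ : Fin (m+1)) with
        | x => exact absurd hij (lt_irrefl _)
        | p j =>
          rw [Fin.insertNth_apply_same, Fin.insertNth_apply_succAbove]
          rw [Fin.lt_succAbove_iff_le_castSucc, Fin.le_def] at hij
          have h1 : ¬ r j < x := by rw [key]; simpa using hij
          exact lt_of_le_of_ne (not_lt.1 h1) fun h => hx ⟨j, h.symm⟩
      | p i =>
        induction j using Fin.succAboveCases (⟨c, hcard⟩ : Fin (m+1)) with
        | x =>
          rw [Fin.insertNth_apply_same, Fin.insertNth_apply_succAbove]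
          rw [Fin.succAbove_lt_iff_castSucc_lt, Fin.lt_def] at hij
          exact (key i).2 hij
        | p j =>
          rw [Fin.insertNth_apply_succAbove, Fin.insertNth_apply_succAbove]
          exact hr ((Fin.strictMono_succAbove _).lt_iff_lt.1 hij)
    have := det_pos' (m+1) γ _ hγ hmono
    rw [expand] at this
    simpa using this


open Finset

/-- Interpolation with exponential Descartes systems: given `γ₁ < ... < γₙ` and
prescribed points `r₁ < ... < r_{n-1}`, there is an exponential polynomial
`φ(x) = Σ aᵢ e^{γᵢ x}` with alternating nonzero coefficients whose zeros are
exactly the `rᵢ`, each being a strict sign change. -/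
theorem descartes_interpolation (n : ℕ) (hn : 2 ≤ n)
    (γ : Fin n → ℝ) (hγ : StrictMono γ)
    (r : Fin (n - 1) → ℝ) (hr : StrictMono r) :
    ∃ a : Fin n → ℝ,
      (∀ i, a i ≠ 0) ∧
      (∀ i j : Fin n, (j : ℕ) = (i : ℕ) + 1 → a i * a j < 0) ∧
      (∀ i : Fin (n - 1), (∑ k, a k * Real.exp (γ k * r i)) = 0) ∧
      ∃ ε : ℝ, (ε = 1 ∨ ε = -1) ∧
        ∀ x : ℝ, x ∉ Set.range r →
          0 < ε * (-1 : ℝ) ^ ((univ.filter fun i => r i < x).card) *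
            (∑ k, a k * Real.exp (γ k * x)) := by
  obtain ⟨m, rfl⟩ : ∃ m, n = m + 1 := ⟨n - 1, by omega⟩
  exact interp_aux m γ hγ r hr
end

section
/- Define g_α(x) := x⁻² ∫₀ˣ y·e^{−αy} dy for x > 0 and α ≥ 0. Then for every m ≥ 1, all exponents β₁ > β₂ > ... > βₘ ≥ 0, and all points 0 < x₁ < x₂ < ... < xₘ, the m×m matrix whose (i,j) entry is g_{βⱼ}(xᵢ) has strictly positive determinant. -/
open MeasureTheory intervalIntegral

lemma core_aux {m : ℕ} (f : Fin m → ℝ → ℝ) (hf : ∀ j, Continuous (f j))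
    (a b : Fin m → ℝ) (hab : ∀ i, a i < b i)
    (hpos : ∀ t : Fin m → ℝ, (∀ i, t i ∈ Set.Ioo (a i) (b i)) →
      0 < (Matrix.of fun i j : Fin m => f j (t i)).det) (S : Finset (Fin m)) :
    ∀ t : Fin m → ℝ, (∀ i, t i ∈ Set.Ioo (a i) (b i)) →
      0 < (Matrix.of fun i j : Fin m =>
        if i ∈ S then ∫ s in (a i)..(b i), f j s else f j (t i)).det := by
  classical
  induction S using Finset.induction_on with
  | empty => simpa using hpos
  | insert k S hk ih =>
    intro t ht
    set M : Matrix (Fin m) (Fin m) ℝ := Matrix.of fun i j : Fin m =>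
        if i ∈ S then ∫ s in (a i)..(b i), f j s else f j (t i) with hM
    have hlin : ∀ v : Fin m → ℝ, (M.updateRow k v).det =
        ∑ j, v j * (M.updateRow k (Pi.single j 1)).det := by
      intro v
      have h := LinearMap.pi_apply_eq_sum_univ
        ((Matrix.detRowAlternating (n := Fin m) (R := ℝ)).toMultilinearMap.toLinearMap M k) v
      have e : ∀ j : Fin m, (fun i => if j = i then (1:ℝ) else 0) = Pi.single j 1 := by
        intro j; ext i; simp [Pi.single_apply, eq_comm]
      simp only [e] at h
      exact h
    have e1 : (Matrix.of fun i j : Fin m =>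
        if i ∈ insert k S then ∫ s in (a i)..(b i), f j s else f j (t i)) =
        M.updateRow k (fun j => ∫ s in (a k)..(b k), f j s) := by
      ext i j
      by_cases h : i = k
      · subst h; simp
      · simp [Matrix.updateRow_ne h, hM, h]
    have e2 : ∀ s ∈ Set.Ioo (a k) (b k), 0 < (M.updateRow k (fun j => f j s)).det := by
      intro s hs
      have h := ih (Function.update t k s) (by
        intro i
        by_cases h : i = k
        · subst h; simpa using hs
        · simpa [h] using ht i)
      convert h using 2
      ext i j
      by_cases h : i = k
      · subst h; simp [hk]
      · simp [Matrix.updateRow_ne h, hM, h]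
    have e3 : (M.updateRow k (fun j => ∫ s in (a k)..(b k), f j s)).det =
        ∫ s in (a k)..(b k), (M.updateRow k (fun j => f j s)).det := by
      rw [hlin]
      simp_rw [fun s => hlin (fun j => f j s)]
      rw [intervalIntegral.integral_finset_sum]
      · simp
      · intro j _
        exact ((hf j).mul continuous_const).intervalIntegrable _ _
    rw [e1, e3]
    apply intervalIntegral.intervalIntegral_pos_of_pos_on _ e2 (hab k)
    simp_rw [fun s => hlin (fun j => f j s)]
    apply Continuous.intervalIntegrable
    exact continuous_finsetSum _ fun j _ => (hf j).mul continuous_const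

lemma core {m : ℕ} (f : Fin m → ℝ → ℝ) (hf : ∀ j, Continuous (f j))
    (a b : Fin m → ℝ) (hab : ∀ i, a i < b i)
    (hpos : ∀ t : Fin m → ℝ, (∀ i, t i ∈ Set.Ioo (a i) (b i)) →
      0 < (Matrix.of fun i j : Fin m => f j (t i)).det) :
    0 < (Matrix.of fun i j : Fin m => ∫ s in (a i)..(b i), f j s).det := by
  simpa using core_aux f hf a b hab hpos Finset.univ (fun i => (a i + b i) / 2)
    (fun i => ⟨by linarith [hab i], by linarith [hab i]⟩)

lemma strictMono_of_mem {n : ℕ} (a b t : Fin n → ℝ) (hba : ∀ i j, i < j → b i ≤ a j)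
    (ht : ∀ i, t i ∈ Set.Ioo (a i) (b i)) : StrictMono t := fun i j h =>
  (ht i).2.trans_le ((hba i j h).trans (ht j).1.le)

lemma exp_det_pos : ∀ (n : ℕ) (γ t : Fin n → ℝ), StrictMono γ → StrictMono t →
    0 < (Matrix.of fun i j : Fin n => Real.exp (γ j * t i)).det
  | 0, _, _, _, _ => by simp
  | n + 1, γ, t, hγ, ht => by
    have e1 : (Matrix.of fun i j : Fin (n+1) => Real.exp (γ j * t i)) =
        Matrix.of fun i j => Real.exp (γ 0 * t i) *
          (Matrix.of fun i j : Fin (n+1) => Real.exp ((γ j - γ 0) * t i)) i j := by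
      ext i j
      simp only [Matrix.of_apply, ← Real.exp_add]
      congr 1; ring
    rw [e1, Matrix.det_mul_column]
    refine mul_pos (Finset.prod_pos fun i _ => Real.exp_pos _) ?_
    set δ : Fin n → ℝ := fun j => γ j.succ - γ 0 with hδ
    have hδ0 : ∀ j, 0 < δ j := fun j => sub_pos.2 (hγ (Fin.succ_pos j))
    set B : Matrix (Fin (n+1)) (Fin (n+1)) ℝ := Matrix.of fun i j =>
      Fin.cases (motive := fun _ => ℝ) (Real.exp ((γ j - γ 0) * t 0))
        (fun i => Real.exp ((γ j - γ 0) * t i.succ) - Real.exp ((γ j - γ 0) * t i.castSucc)) i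
      with hB
    rw [Matrix.det_eq_of_forall_row_eq_smul_add_pred (B := B) (fun _ => 1)
      (by intro j; simp [hB]) (by intro i j; simp [hB])]
    rw [Matrix.det_succ_column_zero, Fin.sum_univ_succ]
    have z : ∀ i : Fin n, B i.succ 0 = 0 := by intro i; simp [hB]
    have z0 : B 0 0 = 1 := by simp [hB]
    simp only [z, z0, Fin.val_zero, pow_zero, mul_zero, zero_mul, Finset.sum_const_zero, add_zero,
      one_mul]
    have e2 : B.submatrix (Fin.succAbove 0) Fin.succ = Matrix.of fun i j : Fin n =>
        ∫ s in (t i.castSucc)..(t i.succ), δ j * Real.exp (δ j * s) := by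
      ext i j
      simp only [Matrix.submatrix_apply, Matrix.of_apply, Fin.succAbove_zero]
      rw [intervalIntegral.integral_eq_sub_of_hasDerivAt
        (f := fun s => Real.exp (δ j * s))]
      · simp [hB, hδ]
      · intro s _
        have := ((hasDerivAt_id s).const_mul (δ j)).exp
        simpa [mul_comm] using this
      · apply Continuous.intervalIntegrable; fun_prop
    rw [e2]
    apply core (fun j s => δ j * Real.exp (δ j * s)) (fun j => by fun_prop)
    · intro i; exact ht Fin.castSucc_lt_succ
    · intro s hs
      have hsm := strictMono_of_mem _ _ s (fun i j h => ht.monotone (by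
        rw [Fin.le_def]; simpa using h)) hs
      have := Matrix.det_mul_row δ (Matrix.of fun i j : Fin n => Real.exp (δ j * s i))
      simp only [Matrix.of_apply] at this
      rw [this]
      refine mul_pos (Finset.prod_pos fun i _ => hδ0 i) ?_
      refine exp_det_pos n δ s ?_ hsm
      intro i j h
      simpa [hδ] using hγ (Fin.succ_lt_succ_iff.2 h)

/-- The family `(g_{β₁}, ..., g_{βₘ})` with `β₁ > ... > βₘ ≥ 0`, where
`g_α(x) = x⁻² ∫₀ˣ y e^{−αy} dy`, is a Descartes system on `(0,∞)`:
all its minors at increasing points are strictly positive. -/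
theorem g_descartes_system (m : ℕ) (hm : 1 ≤ m)
    (β : Fin m → ℝ) (hβ : StrictAnti β) (hβ0 : ∀ j, 0 ≤ β j)
    (x : Fin m → ℝ) (hx : StrictMono x) (hx0 : ∀ i, 0 < x i) :
    0 < (Matrix.of fun i j : Fin m =>
      ((x i) ^ 2)⁻¹ * ∫ t in (0 : ℝ)..(x i), t * Real.exp (-(β j * t))).det := by
  obtain ⟨n, rfl⟩ : ∃ n, m = n + 1 := ⟨m - 1, by omega⟩
  have e1 := Matrix.det_mul_column (fun i => ((x i) ^ 2)⁻¹)
    (Matrix.of fun i j : Fin (n+1) => ∫ t in (0 : ℝ)..(x i), t * Real.exp (-(β j * t)))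
  simp only [Matrix.of_apply] at e1
  rw [e1]
  refine mul_pos (Finset.prod_pos fun i _ => inv_pos.2 (pow_pos (hx0 i) 2)) ?_
  set a : Fin (n+1) → ℝ := Fin.cons 0 (fun i : Fin n => x i.castSucc) with ha
  have hc : ∀ j, Continuous fun t : ℝ => t * Real.exp (-(β j * t)) := fun j => by fun_prop
  rw [Matrix.det_eq_of_forall_row_eq_smul_add_pred
    (B := Matrix.of fun i j : Fin (n+1) => ∫ t in (a i)..(x i), t * Real.exp (-(β j * t)))
    (fun _ => 1) (by intro j; simp [ha]) (by
      intro i j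
      simp only [Matrix.of_apply, ha, Fin.cons_succ, one_mul]
      rw [add_comm, intervalIntegral.integral_add_adjacent_intervals] <;>
      exact (hc j).intervalIntegrable _ _)]
  apply core (fun j t => t * Real.exp (-(β j * t))) hc
  · intro i
    refine Fin.cases ?_ (fun i => ?_) i
    · simpa [ha] using hx0 0
    · simpa [ha] using hx Fin.castSucc_lt_succ
  · intro s hs
    have hs0 : ∀ i, 0 < s i := by
      intro i
      refine lt_of_le_of_lt ?_ (hs i).1
      refine Fin.cases ?_ (fun i => ?_) i
      · simp [ha]
      · simpa [ha] using (hx0 _).le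
    have hsm := strictMono_of_mem _ _ s (fun i j h => by
      revert h
      refine Fin.cases ?_ (fun j => ?_) j
      · intro h; exact absurd h (Fin.not_lt_zero i)
      · intro h
        simp only [ha, Fin.cons_succ]
        exact hx.monotone (Fin.le_castSucc_iff.2 h)) hs
    have := Matrix.det_mul_column s (Matrix.of fun i j : Fin (n+1) => Real.exp (-(β j * s i)))
    simp only [Matrix.of_apply] at this
    rw [this]
    refine mul_pos (Finset.prod_pos fun i _ => hs0 i) ?_
    have h := exp_det_pos (n+1) (fun j => -β j) s (fun i j h => neg_lt_neg (hβ h)) hsm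
    simpa only [neg_mul] using h
end

section
/- Let 0 < λ₁ < λ₂ ≤ 2λ₁, let u₁, u₂ ≥ 0, c ≥ 0 and w₁, w₂ ∈ ℝ, define l(x) = u₂e^{−2λ₂x} + c·e^{−(λ₁+λ₂)x} + w₂e^{−λ₂x} + u₁e^{−2λ₁x} + w₁e^{−λ₁x}, and define m(x) := x⁻² ∫₀ˣ y·l(y) dy for x > 0. Then for q ∈ {l, m} there do not exist points 0 < x₁ < x₂ < x₃ with q(x₁) < 0, q(x₂) > 0, and q(x₃) < 0. -/
open MeasureTheory intervalIntegral

/-- After division by `exp (-lam1 x)`, the function is convex in `s = exp (-(lam2 - lam1) x)`. -/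
lemma no_pattern_l
    (lam1 lam2 : ℝ) (h1 : 0 < lam1) (h2 : lam1 < lam2) (h3 : lam2 ≤ 2 * lam1)
    (u1 u2 c w1 w2 : ℝ) (hu1 : 0 ≤ u1) (hu2 : 0 ≤ u2) (hc : 0 ≤ c)
    (l : ℝ → ℝ)
    (hl : ∀ x : ℝ, l x = u2 * Real.exp (-(2 * lam2 * x)) +
        c * Real.exp (-((lam1 + lam2) * x)) + w2 * Real.exp (-(lam2 * x)) +
        u1 * Real.exp (-(2 * lam1 * x)) + w1 * Real.exp (-(lam1 * x)))
    (x1 x2 x3 : ℝ) (h12 : x1 ≤ x2) (h23 : x2 ≤ x3)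
    (hx1 : l x1 < 0) (hx2 : 0 < l x2) (hx3 : l x3 < 0) : False := by
  have ha : 0 < lam2 - lam1 := by linarith
  let f : ℝ → ℝ := fun s => u2 * s ^ ((2 * lam2 - lam1) / (lam2 - lam1)) +
    c * s ^ (lam2 / (lam2 - lam1)) + w2 * s + u1 * s ^ (lam1 / (lam2 - lam1)) + w1
  have hconv : ConvexOn ℝ (Set.Ici 0) f := by
    have e1 : 1 ≤ (2 * lam2 - lam1) / (lam2 - lam1) := by rw [le_div_iff₀ ha]; linarith
    have e2 : 1 ≤ lam2 / (lam2 - lam1) := by rw [le_div_iff₀ ha]; linarith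
    have e3 : 1 ≤ lam1 / (lam2 - lam1) := by rw [le_div_iff₀ ha]; linarith
    have c1 := (convexOn_rpow e1).smul hu2
    have c2 := (convexOn_rpow e2).smul hc
    have c3 := (convexOn_rpow e3).smul hu1
    have c4 : ConvexOn ℝ (Set.Ici (0:ℝ)) (fun s : ℝ => w2 * s) := by
      refine ⟨convex_Ici 0, fun x _ y _ a b _ _ _ => le_of_eq ?_⟩
      simp only [smul_eq_mul]; ring
    exact (((c1.add c2).add c4).add c3).add (convexOn_const w1 (convex_Ici 0))
  have key : ∀ x, l x = Real.exp (-(lam1 * x)) * f (Real.exp (-((lam2 - lam1) * x))) := by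
    intro x
    have e : ∀ k : ℝ, Real.exp (-(lam1 * x)) *
        (Real.exp (-((lam2 - lam1) * x))) ^ (k / (lam2 - lam1)) =
        Real.exp (-((lam1 + k) * x)) := by
      intro k
      rw [← Real.exp_mul, ← Real.exp_add]
      congr 1
      field_simp
      ring
    have e0 : Real.exp (-(lam1 * x)) * Real.exp (-((lam2 - lam1) * x)) =
        Real.exp (-(lam2 * x)) := by
      rw [← Real.exp_add]; congr 1; ring
    have a1 := e (2 * lam2 - lam1)
    have a2 := e lam2
    have a3 := e lam1
    rw [show lam1 + (2 * lam2 - lam1) = 2 * lam2 by ring] at a1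
    rw [show lam1 + lam1 = 2 * lam1 by ring] at a3
    rw [hl, ← a1, ← a2, ← a3, ← e0]
    simp only [f]
    ring
  have neg : ∀ x, l x < 0 → f (Real.exp (-((lam2 - lam1) * x))) < 0 := by
    intro x hx
    rw [key] at hx
    by_contra hcon
    push Not at hcon
    exact absurd (mul_nonneg (Real.exp_pos (-(lam1 * x))).le hcon) (not_le.mpr hx)
  have pos : 0 < f (Real.exp (-((lam2 - lam1) * x2))) := by
    rw [key] at hx2
    exact pos_of_mul_pos_right hx2 (Real.exp_pos _).le
  have n1 := neg x1 hx1
  have n3 := neg x3 hx3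
  have := hconv.le_max_of_mem_Icc (x := Real.exp (-((lam2 - lam1) * x3)))
    (y := Real.exp (-((lam2 - lam1) * x1))) (z := Real.exp (-((lam2 - lam1) * x2)))
    (Real.exp_pos _).le (Real.exp_pos _).le
    ⟨Real.exp_le_exp.mpr (by nlinarith), Real.exp_le_exp.mpr (by nlinarith)⟩
  exact absurd (this.trans_lt (max_lt n3 n1)) (not_lt.mpr pos.le)

/-- Scale-proximal (or critical) case with nonnegative correlation: the sign
pattern `(−, +, −)` is impossible for the derivatives of forward and yield curve. -/
theorem no_minus_plus_minus_prox_nonneg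
    (lam1 lam2 : ℝ) (h1 : 0 < lam1) (h2 : lam1 < lam2) (h3 : lam2 ≤ 2 * lam1)
    (u1 u2 c w1 w2 : ℝ) (hu1 : 0 ≤ u1) (hu2 : 0 ≤ u2) (hc : 0 ≤ c)
    (l m : ℝ → ℝ)
    (hl : ∀ x : ℝ, l x = u2 * Real.exp (-(2 * lam2 * x)) +
        c * Real.exp (-((lam1 + lam2) * x)) + w2 * Real.exp (-(lam2 * x)) +
        u1 * Real.exp (-(2 * lam1 * x)) + w1 * Real.exp (-(lam1 * x)))
    (hm : ∀ x : ℝ, 0 < x → m x = (x ^ 2)⁻¹ * ∫ t in (0 : ℝ)..x, t * l t) :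
    ∀ q : ℝ → ℝ, (q = l ∨ q = m) →
      ¬ ∃ x1 x2 x3 : ℝ, 0 < x1 ∧ x1 < x2 ∧ x2 < x3 ∧
        q x1 < 0 ∧ 0 < q x2 ∧ q x3 < 0 := by
  have hL := no_pattern_l lam1 lam2 h1 h2 h3 u1 u2 c w1 w2 hu1 hu2 hc l hl
  rintro q (rfl | rfl) ⟨x1, x2, x3, h0, h12, h23, hx1, hx2, hx3⟩
  · exact hL x1 x2 x3 h12.le h23.le hx1 hx2 hx3
  have hcont : Continuous l := by
    have : l = _ := funext hl
    rw [this]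
    fun_prop
  have hint : ∀ a b : ℝ, IntervalIntegrable (fun t => t * l t) volume a b := fun a b =>
    (continuous_id.mul hcont).intervalIntegrable a b
  have p2 : 0 < x2 := h0.trans h12
  have p3 : 0 < x3 := p2.trans h23
  rw [hm x1 h0] at hx1
  rw [hm x2 p2] at hx2
  rw [hm x3 p3] at hx3
  have i1 : ∫ t in (0 : ℝ)..x1, t * l t < 0 := by
    by_contra hcon
    push Not at hcon
    exact absurd (mul_nonneg (by positivity : 0 ≤ (x1 ^ 2)⁻¹) hcon) (not_le.mpr hx1)
  have i2 : 0 < ∫ t in (0 : ℝ)..x2, t * l t := pos_of_mul_pos_right hx2 (by positivity)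
  have i3 : ∫ t in (0 : ℝ)..x3, t * l t < 0 := by
    by_contra hcon
    push Not at hcon
    exact absurd (mul_nonneg (by positivity : 0 ≤ (x3 ^ 2)⁻¹) hcon) (not_le.mpr hx3)
  have s12 := integral_add_adjacent_intervals (hint 0 x1) (hint x1 x2)
  have s23 := integral_add_adjacent_intervals (hint 0 x2) (hint x2 x3)
  have exneg : ∀ a b : ℝ, 0 ≤ a → a ≤ b → ∫ t in a..b, t * l t < 0 →
      ∃ y, a ≤ y ∧ y ≤ b ∧ l y < 0 := by
    intro a b ha hab hI
    by_contra! hcon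
    exact absurd (integral_nonneg hab fun t ht =>
      mul_nonneg (ha.trans ht.1) (hcon t ht.1 ht.2)) (not_le.mpr hI)
  have expos : ∃ y, x1 ≤ y ∧ y ≤ x2 ∧ 0 < l y := by
    by_contra! hcon
    have : 0 ≤ ∫ t in x1..x2, -(t * l t) := integral_nonneg h12.le fun t ht =>
      neg_nonneg.mpr (mul_nonpos_of_nonneg_of_nonpos (h0.le.trans ht.1) (hcon t ht.1 ht.2))
    rw [intervalIntegral.integral_neg] at this
    linarith
  obtain ⟨y1, _, b1, n1⟩ := exneg 0 x1 le_rfl h0.le i1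
  obtain ⟨y2, a2, b2, n2⟩ := expos
  obtain ⟨y3, a3, _, n3⟩ := exneg x2 x3 p2.le h23.le (by linarith)
  exact hL y1 y2 y3 (b1.trans a2) (b2.trans a3) n1 n2 n3
end

section
/- Let 0 < λ₁ and 2λ₁ ≤ λ₂, let u₁, u₂ ≥ 0 and c, w₁, w₂ ∈ ℝ, define l(x) = u₂e^{−2λ₂x} + c·e^{−(λ₁+λ₂)x} + w₂e^{−λ₂x} + u₁e^{−2λ₁x} + w₁e^{−λ₁x}, and define m(x) := x⁻² ∫₀ˣ y·l(y) dy for x > 0. Then for q ∈ {l, m} there do not exist points 0 < x₁ < x₂ < x₃ < x₄ with q(x₁) < 0, q(x₂) > 0, q(x₃) < 0, and q(x₄) > 0. -/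
open MeasureTheory intervalIntegral

lemma exists_deriv_pos_aux (f fp : ℝ → ℝ) (hf : ∀ x, HasDerivAt f (fp x) x) (a b : ℝ)
    (hab : a < b) (h : f a < f b) : ∃ z, a < z ∧ z < b ∧ 0 < fp z := by
  obtain ⟨z, hz, e⟩ := exists_hasDerivAt_eq_slope f fp hab
    (fun x _ => (hf x).continuousAt.continuousWithinAt) (fun x _ => hf x)
  refine ⟨z, hz.1, hz.2, ?_⟩
  rw [e]
  exact div_pos (sub_pos.2 h) (sub_pos.2 hab)

lemma exists_deriv_neg_aux (f fp : ℝ → ℝ) (hf : ∀ x, HasDerivAt f (fp x) x) (a b : ℝ)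
    (hab : a < b) (h : f b < f a) : ∃ z, a < z ∧ z < b ∧ fp z < 0 := by
  obtain ⟨z, h1, h2, h3⟩ := exists_deriv_pos_aux (fun x => - f x) (fun x => - fp x)
    (fun x => (hf x).neg) a b hab (by simpa using h)
  exact ⟨z, h1, h2, by simpa using h3⟩

lemma hasDerivAt_exp_aux (a k x : ℝ) :
    HasDerivAt (fun x => a * Real.exp (k * x)) (k * a * Real.exp (k * x)) x := by
  have h := (((hasDerivAt_id x).const_mul k).exp).const_mul a
  simp only [id, mul_one] at h
  have e : k * a * Real.exp (k * x) = a * (Real.exp (k * x) * k) := by ring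
  rw [e]
  exact h

lemma no_pattern_aux (p r : ℝ) (h1 : 0 < p) (h2 : 2 * p ≤ r)
    (u1 u2 : ℝ) (hu1 : 0 ≤ u1) (hu2 : 0 ≤ u2) (c w1 w2 : ℝ) (l : ℝ → ℝ)
    (hl : ∀ x : ℝ, l x = u2 * Real.exp (-(2 * r * x)) +
        c * Real.exp (-((p + r) * x)) + w2 * Real.exp (-(r * x)) +
        u1 * Real.exp (-(2 * p * x)) + w1 * Real.exp (-(p * x)))
    (x1 x2 x3 x4 : ℝ) (h12 : x1 < x2) (h23 : x2 < x3) (h34 : x3 < x4)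
    (l1 : l x1 < 0) (l2 : 0 < l x2) (l3 : l x3 < 0) (l4 : 0 < l x4) : False := by
  have hrp : 0 < r - p := by linarith
  have hr : 0 < r := by linarith
  obtain ⟨f, hfdef⟩ : ∃ F : ℝ → ℝ, F = fun x => u2 * Real.exp (-r * x) + c * Real.exp (-p * x) + w2
    + u1 * Real.exp ((r - 2 * p) * x) + w1 * Real.exp ((r - p) * x) := ⟨_, rfl⟩
  obtain ⟨fp, hfpdef⟩ : ∃ F : ℝ → ℝ, F = fun x => -r * u2 * Real.exp (-r * x) + -p * c * Real.exp (-p * x)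
    + (r - 2 * p) * u1 * Real.exp ((r - 2 * p) * x)
    + (r - p) * w1 * Real.exp ((r - p) * x) := ⟨_, rfl⟩
  obtain ⟨g, hgdef⟩ : ∃ F : ℝ → ℝ, F = fun x => -r * u2 * Real.exp ((p - r) * x) + -p * c
    + (r - 2 * p) * u1 * Real.exp ((r - p) * x)
    + (r - p) * w1 * Real.exp (r * x) := ⟨_, rfl⟩
  obtain ⟨gp, hgpdef⟩ : ∃ F : ℝ → ℝ, F = fun x => (p - r) * (-r * u2) * Real.exp ((p - r) * x)
    + (r - p) * ((r - 2 * p) * u1) * Real.exp ((r - p) * x)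
    + r * ((r - p) * w1) * Real.exp (r * x) := ⟨_, rfl⟩
  have hf : ∀ x, HasDerivAt f (fp x) x := by
    intro x
    rw [hfdef, hfpdef]
    exact ((((hasDerivAt_exp_aux u2 (-r) x).add (hasDerivAt_exp_aux c (-p) x)).add_const w2).add
      (hasDerivAt_exp_aux u1 (r - 2 * p) x)).add (hasDerivAt_exp_aux w1 (r - p) x)
  have hg : ∀ x, HasDerivAt g (gp x) x := by
    intro x
    rw [hgdef, hgpdef]
    exact (((hasDerivAt_exp_aux (-r * u2) (p - r) x).add_const (-p * c)).add
      (hasDerivAt_exp_aux ((r - 2 * p) * u1) (r - p) x)).add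
      (hasDerivAt_exp_aux ((r - p) * w1) r x)
  have hfl : ∀ x, f x = l x * Real.exp (r * x) := by
    intro x
    rw [hl, hfdef]
    simp only [add_mul, mul_assoc, ← Real.exp_add]
    ring_nf
    simp
  have hgf : ∀ x, g x = fp x * Real.exp (p * x) := by
    intro x
    rw [hgdef, hfpdef]
    simp only [add_mul, mul_assoc, ← Real.exp_add]
    ring_nf
    simp
  have f1 : f x1 < 0 := by rw [hfl]; exact mul_neg_of_neg_of_pos l1 (Real.exp_pos _)
  have f2 : 0 < f x2 := by rw [hfl]; exact mul_pos l2 (Real.exp_pos _)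
  have f3 : f x3 < 0 := by rw [hfl]; exact mul_neg_of_neg_of_pos l3 (Real.exp_pos _)
  have f4 : 0 < f x4 := by rw [hfl]; exact mul_pos l4 (Real.exp_pos _)
  obtain ⟨y1, _, b1, d1⟩ := exists_deriv_pos_aux f fp hf x1 x2 h12 (by linarith)
  obtain ⟨y2, a2, b2, d2⟩ := exists_deriv_neg_aux f fp hf x2 x3 h23 (by linarith)
  obtain ⟨y3, a3, _, d3⟩ := exists_deriv_pos_aux f fp hf x3 x4 h34 (by linarith)
  have g1 : 0 < g y1 := by rw [hgf]; exact mul_pos d1 (Real.exp_pos _)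
  have g2 : g y2 < 0 := by rw [hgf]; exact mul_neg_of_neg_of_pos d2 (Real.exp_pos _)
  have g3 : 0 < g y3 := by rw [hgf]; exact mul_pos d3 (Real.exp_pos _)
  obtain ⟨z1, _, q1, e1⟩ := exists_deriv_neg_aux g gp hg y1 y2 (by linarith) (by linarith)
  obtain ⟨z2, q2, _, e2⟩ := exists_deriv_pos_aux g gp hg y2 y3 (by linarith) (by linarith)
  have hz : z1 ≤ z2 := by linarith
  obtain ⟨k, hkdef⟩ : ∃ F : ℝ → ℝ, F = fun x => (r - p) * (r * u2) * Real.exp (-(2 * r - p) * x)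
    + (r - p) * ((r - 2 * p) * u1) * Real.exp (-p * x) + r * ((r - p) * w1) := ⟨_, rfl⟩
  have hkg : ∀ x, k x = gp x * Real.exp (-r * x) := by
    intro x
    rw [hkdef, hgpdef]
    simp only [add_mul, mul_assoc, ← Real.exp_add]
    ring_nf
    simp
  have k1 : k z1 < 0 := by rw [hkg]; exact mul_neg_of_neg_of_pos e1 (Real.exp_pos _)
  have k2 : 0 < k z2 := by rw [hkg]; exact mul_pos e2 (Real.exp_pos _)
  have A : Real.exp (-(2 * r - p) * z2) ≤ Real.exp (-(2 * r - p) * z1) :=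
    Real.exp_le_exp.2 (by nlinarith)
  have B : Real.exp (-p * z2) ≤ Real.exp (-p * z1) := Real.exp_le_exp.2 (by nlinarith)
  have AA := mul_le_mul_of_nonneg_left A (mul_nonneg hrp.le (mul_nonneg hr.le hu2))
  have BB := mul_le_mul_of_nonneg_left B
    (mul_nonneg hrp.le (mul_nonneg (by linarith : 0 ≤ r - 2 * p) hu1))
  simp only [hkdef] at k1 k2
  linarith

/-- Scale-separated (or critical) case, any correlation: the sign pattern
`(−, +, −, +)` is impossible for the derivatives of forward and yield curve. -/
theorem no_minus_plus_minus_plus_sep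
    (lam1 lam2 : ℝ) (h1 : 0 < lam1) (h2 : 2 * lam1 ≤ lam2)
    (u1 u2 : ℝ) (hu1 : 0 ≤ u1) (hu2 : 0 ≤ u2) (c w1 w2 : ℝ)
    (l m : ℝ → ℝ)
    (hl : ∀ x : ℝ, l x = u2 * Real.exp (-(2 * lam2 * x)) +
        c * Real.exp (-((lam1 + lam2) * x)) + w2 * Real.exp (-(lam2 * x)) +
        u1 * Real.exp (-(2 * lam1 * x)) + w1 * Real.exp (-(lam1 * x)))
    (hm : ∀ x : ℝ, 0 < x → m x = (x ^ 2)⁻¹ * ∫ t in (0 : ℝ)..x, t * l t) :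
    ∀ q : ℝ → ℝ, (q = l ∨ q = m) →
      ¬ ∃ x1 x2 x3 x4 : ℝ, 0 < x1 ∧ x1 < x2 ∧ x2 < x3 ∧ x3 < x4 ∧
        q x1 < 0 ∧ 0 < q x2 ∧ q x3 < 0 ∧ 0 < q x4 := by
  have key := no_pattern_aux lam1 lam2 h1 h2 u1 u2 hu1 hu2 c w1 w2 l hl
  rintro q (rfl | rfl) ⟨x1, x2, x3, x4, p1, h12, h23, h34, q1, q2, q3, q4⟩
  · exact key x1 x2 x3 x4 h12 h23 h34 q1 q2 q3 q4
  have hc : Continuous (fun t => t * l t) := by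
    rw [funext hl]
    fun_prop
  set F : ℝ → ℝ := fun x => ∫ t in (0 : ℝ)..x, t * l t with hF
  have hd : ∀ x, HasDerivAt F (x * l x) x := fun x => hc.integral_hasStrictDerivAt 0 x |>.hasDerivAt
  have F0 : F 0 = 0 := by simp [hF]
  have hmF : ∀ x, 0 < x → F x = x ^ 2 * q x := by
    intro x hx
    rw [hm x hx, hF]
    field_simp
  have p2 : 0 < x2 := by linarith
  have p3 : 0 < x3 := by linarith
  have p4 : 0 < x4 := by linarith
  have F1 : F x1 < 0 := by rw [hmF _ p1]; exact mul_neg_of_pos_of_neg (by positivity) q1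
  have F2 : 0 < F x2 := by rw [hmF _ p2]; positivity
  have F3 : F x3 < 0 := by rw [hmF _ p3]; exact mul_neg_of_pos_of_neg (by positivity) q3
  have F4 : 0 < F x4 := by rw [hmF _ p4]; positivity
  obtain ⟨y1, a1, b1, d1⟩ := exists_deriv_neg_aux F _ hd 0 x1 p1 (by linarith)
  obtain ⟨y2, a2, b2, d2⟩ := exists_deriv_pos_aux F _ hd x1 x2 h12 (by linarith)
  obtain ⟨y3, a3, b3, d3⟩ := exists_deriv_neg_aux F _ hd x2 x3 h23 (by linarith)
  obtain ⟨y4, a4, b4, d4⟩ := exists_deriv_pos_aux F _ hd x3 x4 h34 (by linarith)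
  have e1 : 0 < y1 := a1
  have e2 : 0 < y2 := by linarith
  have e3 : 0 < y3 := by linarith
  have e4 : 0 < y4 := by linarith
  exact key y1 y2 y3 y4 (by linarith) (by linarith) (by linarith)
    (by by_contra h; nlinarith [mul_nonneg e1.le (not_lt.1 h)]) ((mul_pos_iff_of_pos_left e2).1 d2)
    (by by_contra h; nlinarith [mul_nonneg e3.le (not_lt.1 h)]) ((mul_pos_iff_of_pos_left e4).1 d4)
end

section
/- Let 0 < λ₁ < λ₂ ≤ 2λ₁, let u₁, u₂ ≥ 0 and c, w₁, w₂ ∈ ℝ, define l(x) = u₂e^{−2λ₂x} + c·e^{−(λ₁+λ₂)x} + w₂e^{−λ₂x} + u₁e^{−2λ₁x} + w₁e^{−λ₁x}, and define m(x) := x⁻² ∫₀ˣ y·l(y) dy for x > 0. Then for q ∈ {l, m} there do not exist points 0 < x₁ < x₂ < x₃ < x₄ < x₅ with q(x₁) < 0, q(x₂) > 0, q(x₃) < 0, q(x₄) > 0, and q(x₅) < 0. -/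
open MeasureTheory intervalIntegral

lemma aux_slope {F F' : ℝ → ℝ} (hF : ∀ x, HasDerivAt F (F' x) x) {a b : ℝ} (hab : a < b)
    (h : F a < F b) : ∃ t, a < t ∧ t < b ∧ 0 < F' t := by
  obtain ⟨t, ht, e⟩ := exists_hasDerivAt_eq_slope F F' hab
    (fun x _ => (hF x).continuousAt.continuousWithinAt) (fun x _ => hF x)
  exact ⟨t, ht.1, ht.2, by rw [e]; exact div_pos (by linarith) (by linarith)⟩

lemma aux_slope_neg {F F' : ℝ → ℝ} (hF : ∀ x, HasDerivAt F (F' x) x) {a b : ℝ} (hab : a < b)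
    (h : F b < F a) : ∃ t, a < t ∧ t < b ∧ F' t < 0 := by
  obtain ⟨t, h1, h2, h3⟩ := aux_slope (F := fun x => - F x) (F' := fun x => - F' x)
    (fun x => (hF x).neg) hab (by simpa using h)
  exact ⟨t, h1, h2, by linarith⟩

lemma aux_up {f f' g : ℝ → ℝ} (r : ℝ) (hf : ∀ x, HasDerivAt f (f' x) x)
    (hg : ∀ x, g x = f' x + r * f x) {a b : ℝ} (hab : a < b)
    (ha : f a < 0) (hb : 0 < f b) : ∃ t, a < t ∧ t < b ∧ 0 < g t := by
  have hd : ∀ x, HasDerivAt (fun x => f x * Real.exp (r * x)) (g x * Real.exp (r * x)) x := by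
    intro x
    have h2 : HasDerivAt (fun x => Real.exp (r * x)) (Real.exp (r * x) * (r * 1)) x :=
      ((hasDerivAt_id x).const_mul r).exp
    exact ((hf x).mul h2).congr_deriv (by rw [hg]; ring)
  obtain ⟨t, h1, h2, h3⟩ := aux_slope hd hab
    ((mul_neg_of_neg_of_pos ha (Real.exp_pos _)).trans (mul_pos hb (Real.exp_pos _)))
  exact ⟨t, h1, h2, (mul_pos_iff_of_pos_right (Real.exp_pos _)).1 h3⟩

lemma aux_down {f f' g : ℝ → ℝ} (r : ℝ) (hf : ∀ x, HasDerivAt f (f' x) x)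
    (hg : ∀ x, g x = f' x + r * f x) {a b : ℝ} (hab : a < b)
    (ha : 0 < f a) (hb : f b < 0) : ∃ t, a < t ∧ t < b ∧ g t < 0 := by
  obtain ⟨t, h1, h2, h3⟩ := aux_up (f := fun x => - f x) (f' := fun x => - f' x)
    (g := fun x => - g x) r (fun x => (hf x).neg) (fun x => by rw [hg]; ring) hab
    (by linarith) (by linarith)
  exact ⟨t, h1, h2, by linarith⟩

/-- Exponential sums with five terms. -/
noncomputable def auxE (r1 r2 r3 r4 r5 a1 a2 a3 a4 a5 x : ℝ) : ℝ :=
  a1 * Real.exp (-(r1 * x)) + a2 * Real.exp (-(r2 * x)) + a3 * Real.exp (-(r3 * x)) +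
    a4 * Real.exp (-(r4 * x)) + a5 * Real.exp (-(r5 * x))

lemma auxE_deriv (r1 r2 r3 r4 r5 a1 a2 a3 a4 a5 x : ℝ) :
    HasDerivAt (auxE r1 r2 r3 r4 r5 a1 a2 a3 a4 a5)
      (auxE r1 r2 r3 r4 r5 (-r1 * a1) (-r2 * a2) (-r3 * a3) (-r4 * a4) (-r5 * a5) x) x := by
  have key : ∀ r a : ℝ, HasDerivAt (fun x => a * Real.exp (-(r * x)))
      (-r * a * Real.exp (-(r * x))) x := by
    intro r a
    have h : HasDerivAt (fun x => Real.exp (-(r * x))) (Real.exp (-(r * x)) * (-(r * 1))) x :=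
      (((hasDerivAt_id x).const_mul r).neg).exp
    exact (h.const_mul a).congr_deriv (by ring)
  exact ((((key r1 a1).add (key r2 a2)).add (key r3 a3)).add (key r4 a4)).add (key r5 a5)

lemma auxE_comb (r r1 r2 r3 r4 r5 a1 a2 a3 a4 a5 x : ℝ) :
    auxE r1 r2 r3 r4 r5 ((r - r1) * a1) ((r - r2) * a2) ((r - r3) * a3) ((r - r4) * a4)
      ((r - r5) * a5) x =
    auxE r1 r2 r3 r4 r5 (-r1 * a1) (-r2 * a2) (-r3 * a3) (-r4 * a4) (-r5 * a5) x +
      r * auxE r1 r2 r3 r4 r5 a1 a2 a3 a4 a5 x := by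
  unfold auxE; ring

lemma auxE_no (r1 r2 r3 r4 r5 a1 a2 a3 a4 a5 : ℝ) (h12 : r2 < r1) (h23 : r3 < r2) (h34 : r4 ≤ r3)
    (h45 : r5 < r4) (ha1 : 0 ≤ a1) (ha3 : 0 ≤ a3) (x1 x2 x3 x4 x5 : ℝ)
    (h1 : x1 < x2) (h2 : x2 < x3) (h3 : x3 < x4) (h4 : x4 < x5)
    (q1 : auxE r1 r2 r3 r4 r5 a1 a2 a3 a4 a5 x1 < 0)
    (q2 : 0 < auxE r1 r2 r3 r4 r5 a1 a2 a3 a4 a5 x2)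
    (q3 : auxE r1 r2 r3 r4 r5 a1 a2 a3 a4 a5 x3 < 0)
    (q4 : 0 < auxE r1 r2 r3 r4 r5 a1 a2 a3 a4 a5 x4)
    (q5 : auxE r1 r2 r3 r4 r5 a1 a2 a3 a4 a5 x5 < 0) : False := by
  have D := auxE_deriv r1 r2 r3 r4 r5
  have C := fun r => auxE_comb r r1 r2 r3 r4 r5
  obtain ⟨y1, y1l, y1r, p1⟩ := aux_up r2 (D _ _ _ _ _) (C r2 _ _ _ _ _) h1 q1 q2
  obtain ⟨y2, y2l, y2r, p2⟩ := aux_down r2 (D _ _ _ _ _) (C r2 _ _ _ _ _) h2 q2 q3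
  obtain ⟨y3, y3l, y3r, p3⟩ := aux_up r2 (D _ _ _ _ _) (C r2 _ _ _ _ _) h3 q3 q4
  obtain ⟨y4, y4l, y4r, p4⟩ := aux_down r2 (D _ _ _ _ _) (C r2 _ _ _ _ _) h4 q4 q5
  obtain ⟨z1, z1l, z1r, s1⟩ := aux_down r4 (D _ _ _ _ _) (C r4 _ _ _ _ _) (y1r.trans y2l) p1 p2
  obtain ⟨z2, z2l, z2r, s2⟩ := aux_up r4 (D _ _ _ _ _) (C r4 _ _ _ _ _) (y2r.trans y3l) p2 p3
  obtain ⟨z3, z3l, z3r, s3⟩ := aux_down r4 (D _ _ _ _ _) (C r4 _ _ _ _ _) (y3r.trans y4l) p3 p4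
  obtain ⟨t1, t1l, t1r, v1⟩ := aux_up r5 (D _ _ _ _ _) (C r5 _ _ _ _ _) (z1r.trans z2l) s1 s2
  obtain ⟨t2, t2l, t2r, v2⟩ := aux_down r5 (D _ _ _ _ _) (C r5 _ _ _ _ _) (z2r.trans z3l) s2 s3
  obtain ⟨t, -, -, v⟩ := aux_down r3 (D _ _ _ _ _) (C r3 _ _ _ _ _) (t1r.trans t2l) v1 v2
  have e : 0 ≤ (r1 - r3) * ((r1 - r5) * ((r1 - r4) * ((r1 - r2) * a1))) :=
    mul_nonneg (by linarith) (mul_nonneg (by linarith) (mul_nonneg (by linarith)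
      (mul_nonneg (by linarith) ha1)))
  have := mul_nonneg e (Real.exp_pos (-(r1 * t))).le
  unfold auxE at v
  simp only [sub_self, zero_mul, mul_zero, add_zero] at v
  linarith

open MeasureTheory intervalIntegral

/-- Scale-proximal (or critical) case, any correlation: the sign pattern
`(−, +, −, +, −)` is impossible for the derivatives of forward and yield curve. -/
theorem no_five_alternations_prox
    (lam1 lam2 : ℝ) (h1 : 0 < lam1) (h2 : lam1 < lam2) (h3 : lam2 ≤ 2 * lam1)
    (u1 u2 : ℝ) (hu1 : 0 ≤ u1) (hu2 : 0 ≤ u2) (c w1 w2 : ℝ)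
    (l m : ℝ → ℝ)
    (hl : ∀ x : ℝ, l x = u2 * Real.exp (-(2 * lam2 * x)) +
        c * Real.exp (-((lam1 + lam2) * x)) + w2 * Real.exp (-(lam2 * x)) +
        u1 * Real.exp (-(2 * lam1 * x)) + w1 * Real.exp (-(lam1 * x)))
    (hm : ∀ x : ℝ, 0 < x → m x = (x ^ 2)⁻¹ * ∫ t in (0 : ℝ)..x, t * l t) :
    ∀ q : ℝ → ℝ, (q = l ∨ q = m) →
      ¬ ∃ x1 x2 x3 x4 x5 : ℝ, 0 < x1 ∧ x1 < x2 ∧ x2 < x3 ∧ x3 < x4 ∧ x4 < x5 ∧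
        q x1 < 0 ∧ 0 < q x2 ∧ q x3 < 0 ∧ 0 < q x4 ∧ q x5 < 0 := by
  have hlE : ∀ x, l x = auxE (2 * lam2) (lam1 + lam2) (2 * lam1) lam2 lam1 u2 c u1 w2 w1 x := by
    intro x; rw [hl]; unfold auxE; ring
  have hlno : ∀ x1 x2 x3 x4 x5 : ℝ, x1 < x2 → x2 < x3 → x3 < x4 → x4 < x5 →
      l x1 < 0 → 0 < l x2 → l x3 < 0 → 0 < l x4 → l x5 < 0 → False := by
    intro x1 x2 x3 x4 x5 a1 a2 a3 a4 b1 b2 b3 b4 b5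
    rw [hlE] at b1 b2 b3 b4 b5
    exact auxE_no _ _ _ _ _ _ _ _ _ _ (by linarith) (by linarith) h3 h2 hu2 hu1 x1 x2 x3 x4 x5
      a1 a2 a3 a4 b1 b2 b3 b4 b5
  rintro q (rfl | rfl) ⟨x1, x2, x3, x4, x5, p, a1, a2, a3, a4, b1, b2, b3, b4, b5⟩
  · exact hlno x1 x2 x3 x4 x5 a1 a2 a3 a4 b1 b2 b3 b4 b5
  · have hcl : Continuous l := by
      rw [funext hlE]
      exact continuous_iff_continuousAt.2 fun x => (auxE_deriv _ _ _ _ _ _ _ _ _ _ x).continuousAt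
    have hc : Continuous fun t => t * l t := continuous_id.mul hcl
    have hD : ∀ x, HasDerivAt (fun x => ∫ t in (0 : ℝ)..x, t * l t) (x * l x) x :=
      fun x => hc.integral_hasStrictDerivAt 0 x |>.hasDerivAt
    have hneg : ∀ x, 0 < x → q x < 0 → (∫ t in (0 : ℝ)..x, t * l t) < 0 := by
      intro x hx h
      rw [hm x hx] at h
      have : 0 < (x ^ 2)⁻¹ := by positivity
      exact (pos_iff_neg_of_mul_neg h).1 this
    have hpos : ∀ x, 0 < x → 0 < q x → 0 < (∫ t in (0 : ℝ)..x, t * l t) := by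
      intro x hx h
      rw [hm x hx] at h
      have : 0 < (x ^ 2)⁻¹ := by positivity
      exact (mul_pos_iff_of_pos_left this).1 h
    have c1 := hneg x1 p b1
    have c2 := hpos x2 (by linarith) b2
    have c3 := hneg x3 (by linarith) b3
    have c4 := hpos x4 (by linarith) b4
    have c5 := hneg x5 (by linarith) b5
    obtain ⟨y1, l1, r1, d1⟩ := aux_slope_neg hD p (by simpa using c1)
    obtain ⟨y2, l2, r2, d2⟩ := aux_slope hD a1 (c1.trans c2)
    obtain ⟨y3, l3, r3, d3⟩ := aux_slope_neg hD a2 (c3.trans c2)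
    obtain ⟨y4, l4, r4, d4⟩ := aux_slope hD a3 (c3.trans c4)
    obtain ⟨y5, l5, r5, d5⟩ := aux_slope_neg hD a4 (c5.trans c4)
    have n : ∀ y, 0 < y → y * l y < 0 → l y < 0 := fun y hy h => (pos_iff_neg_of_mul_neg h).1 hy
    have n' : ∀ y, 0 < y → 0 < y * l y → 0 < l y := fun y hy h => (mul_pos_iff_of_pos_left hy).1 h
    exact hlno y1 y2 y3 y4 y5 (by linarith) (by linarith) (by linarith) (by linarith)
      (n _ (by linarith) d1) (n' _ (by linarith) d2) (n _ (by linarith) d3)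
      (n' _ (by linarith) d4) (n _ (by linarith) d5)
end

section
/- Define g_α(x) := x⁻² ∫₀ˣ y·e^{−αy} dy for x > 0 and α ≥ 0. Let 0 < λ₁ < λ₂ and r > 0. Then there exist w₁, w₂ ∈ ℝ with w₁·w₂ < 0 such that the function m(x) := w₂·g_{λ₂}(x) + w₁·g_{λ₁}(x) satisfies m(x) > 0 for 0 < x < r, m(r) = 0, and m(x) < 0 for x > r; and there also exist w₁', w₂' ∈ ℝ with w₁'·w₂' < 0 such that m'(x) := w₂'·g_{λ₂}(x) + w₁'·g_{λ₁}(x) satisfies m'(x) < 0 for 0 < x < r, m'(r) = 0, and m'(x) > 0 for x > r. -/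
open MeasureTheory intervalIntegral

lemma aux_integrable (a x y : ℝ) :
    IntervalIntegrable (fun t : ℝ => t * Real.exp (-(a * t))) volume x y :=
  Continuous.intervalIntegrable (by fun_prop) _ _

lemma aux_pos (a x y : ℝ) (hx : 0 ≤ x) (hxy : x < y) :
    0 < ∫ t in x..y, t * Real.exp (-(a * t)) := by
  apply intervalIntegral_pos_of_pos_on (aux_integrable a x y) _ hxy
  intro t ht
  exact mul_pos (lt_of_le_of_lt hx ht.1) (Real.exp_pos _)

/-- The ratio of the two integrals is strictly decreasing. -/
lemma aux_ratio (a b x y : ℝ) (hab : a < b) (hx : 0 < x) (hxy : x < y) :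
    (∫ t in (0 : ℝ)..y, t * Real.exp (-(b * t))) * (∫ t in (0 : ℝ)..x, t * Real.exp (-(a * t))) <
    (∫ t in (0 : ℝ)..x, t * Real.exp (-(b * t))) *
      (∫ t in (0 : ℝ)..y, t * Real.exp (-(a * t))) := by
  have key : ∀ t, Real.exp (-((b - a) * t)) * Real.exp (-(a * t)) = Real.exp (-(b * t)) := by
    intro t
    rw [← Real.exp_add]
    congr 1
    ring
  have hA : 0 < ∫ t in (0 : ℝ)..x, (t * Real.exp (-(b * t)) -
      Real.exp (-((b - a) * x)) * (t * Real.exp (-(a * t)))) := by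
    apply intervalIntegral_pos_of_pos_on
      ((aux_integrable b 0 x).sub ((aux_integrable a 0 x).const_mul _)) _ hx
    intro t ht
    have h : Real.exp (-((b - a) * x)) < Real.exp (-((b - a) * t)) :=
      Real.exp_lt_exp.mpr (by nlinarith [ht.2])
    have h' := mul_pos (mul_pos ht.1 (Real.exp_pos (-(a * t)))) (sub_pos.mpr h)
    rw [← key t]
    linarith
  have hB : 0 < ∫ t in x..y, (Real.exp (-((b - a) * x)) * (t * Real.exp (-(a * t))) -
      t * Real.exp (-(b * t))) := by
    apply intervalIntegral_pos_of_pos_on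
      (((aux_integrable a x y).const_mul _).sub (aux_integrable b x y)) _ hxy
    intro t ht
    have h : Real.exp (-((b - a) * t)) < Real.exp (-((b - a) * x)) :=
      Real.exp_lt_exp.mpr (by nlinarith [ht.1])
    have h' := mul_pos (mul_pos (hx.trans ht.1) (Real.exp_pos (-(a * t)))) (sub_pos.mpr h)
    rw [← key t]
    linarith
  rw [integral_sub (aux_integrable b 0 x) ((aux_integrable a 0 x).const_mul _),
    intervalIntegral.integral_const_mul] at hA
  rw [integral_sub ((aux_integrable a x y).const_mul _) (aux_integrable b x y),
    intervalIntegral.integral_const_mul] at hB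
  rw [← integral_add_adjacent_intervals (aux_integrable b 0 x) (aux_integrable b x y),
    ← integral_add_adjacent_intervals (aux_integrable a 0 x) (aux_integrable a x y)]
  have p1 := aux_pos a 0 x le_rfl hx
  have p2 := aux_pos a x y hx.le hxy
  nlinarith [mul_pos hA p2, mul_pos hB p1]

/-- Humped and dipped yield curves are strongly attainable: for any `0 < λ₁ < λ₂`
and any prescribed `r > 0`, suitable combinations `w₂ g_{λ₂} + w₁ g_{λ₁}` with
`w₁ w₂ < 0` change sign exactly at `r`, in either direction, where
`g_α(x) = x⁻² ∫₀ˣ y e^{−αy} dy`. -/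
theorem humped_dipped_yield_attainable (lam1 lam2 r : ℝ)
    (h1 : 0 < lam1) (h2 : lam1 < lam2) (hr : 0 < r)
    (g : ℝ → ℝ → ℝ)
    (hg : ∀ α x : ℝ, g α x = (x ^ 2)⁻¹ * ∫ t in (0 : ℝ)..x, t * Real.exp (-(α * t))) :
    (∃ w1 w2 : ℝ, w1 * w2 < 0 ∧
      (∀ x : ℝ, 0 < x → x < r → 0 < w2 * g lam2 x + w1 * g lam1 x) ∧
      (w2 * g lam2 r + w1 * g lam1 r = 0) ∧
      (∀ x : ℝ, r < x → w2 * g lam2 x + w1 * g lam1 x < 0)) ∧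
    (∃ w1' w2' : ℝ, w1' * w2' < 0 ∧
      (∀ x : ℝ, 0 < x → x < r → w2' * g lam2 x + w1' * g lam1 x < 0) ∧
      (w2' * g lam2 r + w1' * g lam1 r = 0) ∧
      (∀ x : ℝ, r < x → 0 < w2' * g lam2 x + w1' * g lam1 x)) := by
  have p1 := aux_pos lam1 0 r le_rfl hr
  have p2 := aux_pos lam2 0 r le_rfl hr
  have L : ∀ x : ℝ, 0 < x → x < r → 0 < (x ^ 2)⁻¹ * _ := fun x hx hxr =>
    mul_pos (inv_pos.mpr (pow_pos hx 2)) (sub_pos.mpr (aux_ratio lam1 lam2 x r h2 hx hxr))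
  have R : ∀ x : ℝ, r < x → 0 < (x ^ 2)⁻¹ * _ := fun x hxr =>
    mul_pos (inv_pos.mpr (pow_pos (hr.trans hxr) 2))
      (sub_pos.mpr (aux_ratio lam1 lam2 r x h2 hr hxr))
  simp only [hg]
  refine ⟨⟨-∫ t in (0 : ℝ)..r, t * Real.exp (-(lam2 * t)),
      ∫ t in (0 : ℝ)..r, t * Real.exp (-(lam1 * t)), ?_, ?_, ?_, ?_⟩,
    ⟨∫ t in (0 : ℝ)..r, t * Real.exp (-(lam2 * t)),
      -∫ t in (0 : ℝ)..r, t * Real.exp (-(lam1 * t)), ?_, ?_, ?_, ?_⟩⟩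
  · nlinarith [mul_pos p1 p2]
  · intro x hx hxr
    linarith [L x hx hxr]
  · ring
  · intro x hxr
    linarith [R x hxr]
  · nlinarith [mul_pos p1 p2]
  · intro x hx hxr
    linarith [L x hx hxr]
  · ring
  · intro x hxr
    linarith [R x hxr]
end

section
/- Let 0 < λ₁ < λ₂ and 0 < r₁ < r₂. Then there exist u₂ > 0 and w₁, w₂ ∈ ℝ such that the function l(x) := u₂·e^{−2λ₂x} + w₂·e^{−λ₂x} + w₁·e^{−λ₁x} satisfies: l(x) > 0 for 0 ≤ x < r₁, l(r₁) = 0, l(x) < 0 for r₁ < x < r₂, l(r₂) = 0, and l(x) > 0 for x > r₂. -/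
lemma exp_three (k a b c : ℝ) (hk : k ≠ 0) (hab : a < b) (hbc : b < c) :
    (c - a) * Real.exp (k * b) < (c - b) * Real.exp (k * a) + (b - a) * Real.exp (k * c) := by
  have key : ∀ y : ℝ, y ≠ b → Real.exp (k * b) * (k * (y - b) + 1) < Real.exp (k * y) := by
    intro y hy
    have h := Real.add_one_lt_exp (mul_ne_zero hk (sub_ne_zero.mpr hy))
    have e : Real.exp (k * y) = Real.exp (k * b) * Real.exp (k * (y - b)) := by
      rw [← Real.exp_add]; congr 1; ring
    rw [e]
    exact mul_lt_mul_of_pos_left h (Real.exp_pos _)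
  have h1 := mul_lt_mul_of_pos_left (key a hab.ne) (sub_pos.mpr hbc)
  have h2 := mul_lt_mul_of_pos_left (key c hbc.ne') (sub_pos.mpr hab)
  linarith

/-- The hump-dip shape `HD` is strongly attainable: for any `0 < λ₁ < λ₂` and
prescribed `0 < r₁ < r₂` there are `u₂ > 0` and `w₁, w₂ ∈ ℝ` such that
`l(x) = u₂ e^{−2λ₂x} + w₂ e^{−λ₂x} + w₁ e^{−λ₁x}` has sign pattern `(+, −, +)`
with zeros exactly at `r₁, r₂`. -/
theorem HD_strongly_attainable (lam1 lam2 r1 r2 : ℝ)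
    (h1 : 0 < lam1) (h2 : lam1 < lam2) (hr1 : 0 < r1) (hr12 : r1 < r2) :
    ∃ u2 w1 w2 : ℝ, 0 < u2 ∧
      (∀ x : ℝ, 0 ≤ x → x < r1 →
        0 < u2 * Real.exp (-(2 * lam2 * x)) + w2 * Real.exp (-(lam2 * x)) +
          w1 * Real.exp (-(lam1 * x))) ∧
      (u2 * Real.exp (-(2 * lam2 * r1)) + w2 * Real.exp (-(lam2 * r1)) +
        w1 * Real.exp (-(lam1 * r1)) = 0) ∧
      (∀ x : ℝ, r1 < x → x < r2 →
        u2 * Real.exp (-(2 * lam2 * x)) + w2 * Real.exp (-(lam2 * x)) +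
          w1 * Real.exp (-(lam1 * x)) < 0) ∧
      (u2 * Real.exp (-(2 * lam2 * r2)) + w2 * Real.exp (-(lam2 * r2)) +
        w1 * Real.exp (-(lam1 * r2)) = 0) ∧
      (∀ x : ℝ, r2 < x →
        0 < u2 * Real.exp (-(2 * lam2 * x)) + w2 * Real.exp (-(lam2 * x)) +
          w1 * Real.exp (-(lam1 * x))) := by
  obtain ⟨d, hd⟩ : ∃ d, d = lam2 - lam1 := ⟨_, rfl⟩
  have hd0 : 0 < d := by linarith
  obtain ⟨u, hu⟩ : ∃ u, u = Real.exp (d * r2) - Real.exp (d * r1) := ⟨_, rfl⟩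
  obtain ⟨w, hw⟩ : ∃ w, w = Real.exp (-lam2 * r1) - Real.exp (-lam2 * r2) := ⟨_, rfl⟩
  have hu0 : 0 < u := by
    rw [hu, sub_pos]; exact Real.exp_lt_exp.mpr (by nlinarith)
  have hw0 : 0 < w := by
    rw [hw, sub_pos]; exact Real.exp_lt_exp.mpr (by nlinarith)
  obtain ⟨v, hv⟩ : ∃ v, v = -(u * Real.exp (-lam2 * r1) + w * Real.exp (d * r1)) := ⟨_, rfl⟩
  obtain ⟨g, hg⟩ : ∃ g : ℝ → ℝ,
      ∀ x, g x = u * Real.exp (-lam2 * x) + v + w * Real.exp (d * x) := ⟨_, fun _ => rfl⟩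
  have hl : ∀ x, u * Real.exp (-(2 * lam2 * x)) + v * Real.exp (-(lam2 * x)) +
      w * Real.exp (-(lam1 * x)) = Real.exp (-(lam2 * x)) * g x := by
    intro x
    have e1 : Real.exp (-(2 * lam2 * x)) = Real.exp (-(lam2 * x)) * Real.exp (-lam2 * x) := by
      rw [← Real.exp_add]; congr 1; ring
    have e2 : Real.exp (-(lam1 * x)) = Real.exp (-(lam2 * x)) * Real.exp (d * x) := by
      rw [← Real.exp_add, hd]; congr 1; ring
    rw [hg, e1, e2]; ring
  have g1 : g r1 = 0 := by rw [hg, hv]; ring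
  have g2 : g r2 = 0 := by rw [hg, hv, hu, hw]; ring
  have conv : ∀ a b c, a < b → b < c → (c - a) * g b < (c - b) * g a + (b - a) * g c := by
    intro a b c hab hbc
    have k1 := mul_lt_mul_of_pos_left
      (exp_three (-lam2) a b c (by linarith : -lam2 < 0).ne hab hbc) hu0
    have k2 := mul_lt_mul_of_pos_left (exp_three d a b c hd0.ne' hab hbc) hw0
    rw [hg, hg, hg]
    linarith
  refine ⟨u, w, v, hu0, ?_, ?_, ?_, ?_, ?_⟩
  · intro x _ hx
    rw [hl]
    have h := conv x r1 r2 hx hr12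
    rw [g1, g2, mul_zero, mul_zero, add_zero] at h
    exact mul_pos (Real.exp_pos _) (pos_of_mul_pos_right h (by linarith))
  · rw [hl, g1, mul_zero]
  · intro x hx hx2
    rw [hl]
    have h := conv r1 x r2 hx hx2
    rw [g1, g2] at h
    exact mul_neg_of_pos_of_neg (Real.exp_pos _) (by nlinarith)
  · rw [hl, g2, mul_zero]
  · intro x hx
    rw [hl]
    have h := conv r1 r2 x hr12 hx
    rw [g1, g2, mul_zero, mul_zero, zero_add] at h
    exact mul_pos (Real.exp_pos _) (pos_of_mul_pos_right h (by linarith))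
end

section
/- Let 0 < λ₁, 2λ₁ < λ₂, and 0 < r₁ < r₂ < r₃. Then there exist u₂ > 0, u₁ > 0 and w₁ < 0, w₂ < 0 such that the function l(x) := u₂·e^{−2λ₂x} + w₂·e^{−λ₂x} + u₁·e^{−2λ₁x} + w₁·e^{−λ₁x} satisfies: l(x) > 0 for 0 ≤ x < r₁, l(x) < 0 for r₁ < x < r₂, l(x) > 0 for r₂ < x < r₃, l(x) < 0 for x > r₃, and l(r₁) = l(r₂) = l(r₃) = 0. -/
theorem aux_inc (G G' : ℝ → ℝ) (hG : ∀ x, HasDerivAt G (G' x) x) (x y : ℝ) (hxy : x < y)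
    (h : ∀ z, x < z → z < y → 0 < G' z) : G x < G y := by
  obtain ⟨c, hc, he⟩ := exists_hasDerivAt_eq_slope G G' hxy
    (fun z _ => (hG z).continuousAt.continuousWithinAt) (fun z _ => hG z)
  have h3 := h c hc.1 hc.2
  rw [he] at h3
  have h4 : 0 < y - x := by linarith
  have := (div_pos_iff_of_pos_right h4).1 h3
  linarith

theorem aux_dec (G G' : ℝ → ℝ) (hG : ∀ x, HasDerivAt G (G' x) x) (x y : ℝ) (hxy : x < y)
    (h : ∀ z, x < z → z < y → G' z < 0) : G y < G x := by
  have := aux_inc (fun z => - G z) (fun z => - G' z) (fun z => (hG z).neg) x y hxy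
    (fun z h1 h2 => by have := h z h1 h2; linarith)
  linarith

theorem aux_rolle (G G' : ℝ → ℝ) (hG : ∀ x, HasDerivAt G (G' x) x) (x y : ℝ) (hxy : x < y)
    (hx : G x = 0) (hy : G y = 0) : ∃ s, x < s ∧ s < y ∧ G' s = 0 := by
  obtain ⟨c, hc, he⟩ := exists_hasDerivAt_eq_zero hxy
    (fun z _ => (hG z).continuousAt.continuousWithinAt) (hx.trans hy.symm) (fun z _ => hG z)
  exact ⟨c, hc.1, hc.2, he⟩

theorem aux_exp (a q x : ℝ) :
    HasDerivAt (fun x => a * Real.exp (q * x)) (a * q * Real.exp (q * x)) x := by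
  have h : HasDerivAt (fun x : ℝ => q * x) q x := by
    simpa using (hasDerivAt_id x).const_mul q
  exact (h.exp.const_mul a).congr_deriv (by ring)

theorem sign2 (p q a b t : ℝ) (hpq : p < q) (hb : 0 < b)
    (h0 : a * Real.exp (p * t) + b * Real.exp (q * t) = 0) :
    (∀ x, x < t → a * Real.exp (p * x) + b * Real.exp (q * x) < 0) ∧
    (∀ x, t < x → 0 < a * Real.exp (p * x) + b * Real.exp (q * x)) := by
  have key : ∀ x, a * Real.exp (p * x) + b * Real.exp (q * x) =
      Real.exp (p * x) * (a + b * Real.exp ((q - p) * x)) := by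
    intro x
    have : Real.exp (q * x) = Real.exp (p * x) * Real.exp ((q - p) * x) := by
      rw [← Real.exp_add]; ring_nf
    rw [this]; ring
  have hz : a + b * Real.exp ((q - p) * t) = 0 := by
    rw [key] at h0
    exact (mul_eq_zero.1 h0).resolve_left (Real.exp_pos _).ne'
  constructor
  · intro x hx
    rw [key]
    apply mul_neg_of_pos_of_neg (Real.exp_pos _)
    have : Real.exp ((q - p) * x) < Real.exp ((q - p) * t) :=
      Real.exp_lt_exp.2 (mul_lt_mul_of_pos_left hx (by linarith))
    nlinarith
  · intro x hx
    rw [key]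
    apply mul_pos (Real.exp_pos _)
    have : Real.exp ((q - p) * t) < Real.exp ((q - p) * x) :=
      Real.exp_lt_exp.2 (mul_lt_mul_of_pos_left hx (by linarith))
    nlinarith

theorem sign3 (p q r a b c t1 t2 : ℝ) (hpq : p < q) (hqr : q < r) (hc : 0 < c) (ht : t1 < t2)
    (F : ℝ → ℝ)
    (hF : ∀ x, F x = a * Real.exp (p * x) + b * Real.exp (q * x) + c * Real.exp (r * x))
    (h1 : F t1 = 0) (h2 : F t2 = 0) :
    (∀ x, x < t1 → 0 < F x) ∧ (∀ x, t1 < x → x < t2 → F x < 0) ∧ (∀ x, t2 < x → 0 < F x) := by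
  let G : ℝ → ℝ := fun x => a + b * Real.exp ((q - p) * x) + c * Real.exp ((r - p) * x)
  let G' : ℝ → ℝ := fun x => b * (q - p) * Real.exp ((q - p) * x)
    + c * (r - p) * Real.exp ((r - p) * x)
  have hG : ∀ x, HasDerivAt G (G' x) x := fun x =>
    ((aux_exp b (q - p) x).const_add a).add (aux_exp c (r - p) x)
  have key : ∀ x, F x = Real.exp (p * x) * G x := by
    intro x
    have e1 : Real.exp (q * x) = Real.exp (p * x) * Real.exp ((q - p) * x) := by
      rw [← Real.exp_add]; ring_nf
    have e2 : Real.exp (r * x) = Real.exp (p * x) * Real.exp ((r - p) * x) := by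
      rw [← Real.exp_add]; ring_nf
    rw [hF, e1, e2]; simp only [G]; ring
  have hz : ∀ x, F x = 0 → G x = 0 := by
    intro x hx
    rw [key] at hx
    exact (mul_eq_zero.1 hx).resolve_left (Real.exp_pos _).ne'
  have pos : ∀ x, 0 < G x → 0 < F x := fun x hx => by
    rw [key]; exact mul_pos (Real.exp_pos _) hx
  have neg : ∀ x, G x < 0 → F x < 0 := fun x hx => by
    rw [key]; exact mul_neg_of_pos_of_neg (Real.exp_pos _) hx
  have z1 := hz _ h1
  have z2 := hz _ h2
  obtain ⟨s, hs1, hs2, hs⟩ := aux_rolle G G' hG t1 t2 ht z1 z2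
  obtain ⟨A, B⟩ := sign2 (q - p) (r - p) (b * (q - p)) (c * (r - p)) s (by linarith)
    (mul_pos hc (by linarith)) hs
  refine ⟨fun x hx => pos x ?_, fun x hx hx' => neg x ?_, fun x hx => pos x ?_⟩
  · have := aux_dec G G' hG x t1 hx (fun z _ hz => A z (by linarith))
    linarith
  · rcases le_or_gt x s with h | h
    · have := aux_dec G G' hG t1 x hx (fun z _ hz => A z (by linarith))
      linarith
    · have := aux_inc G G' hG x t2 hx' (fun z hz _ => B z (by linarith))
      linarith
  · have := aux_inc G G' hG t2 x hx (fun z hz _ => B z (by linarith))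
    linarith

theorem sign4 (p q r v a b c d t1 t2 t3 : ℝ) (hpq : p < q) (hqr : q < r) (hrv : r < v)
    (hd : 0 < d) (ht : t1 < t2) (ht' : t2 < t3) (F : ℝ → ℝ)
    (hF : ∀ x, F x = a * Real.exp (p * x) + b * Real.exp (q * x) + c * Real.exp (r * x)
      + d * Real.exp (v * x))
    (h1 : F t1 = 0) (h2 : F t2 = 0) (h3 : F t3 = 0) :
    (∀ x, x < t1 → F x < 0) ∧ (∀ x, t1 < x → x < t2 → 0 < F x) ∧
    (∀ x, t2 < x → x < t3 → F x < 0) ∧ (∀ x, t3 < x → 0 < F x) := by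
  let G : ℝ → ℝ := fun x => a + b * Real.exp ((q - p) * x) + c * Real.exp ((r - p) * x)
    + d * Real.exp ((v - p) * x)
  let G' : ℝ → ℝ := fun x => b * (q - p) * Real.exp ((q - p) * x)
    + c * (r - p) * Real.exp ((r - p) * x) + d * (v - p) * Real.exp ((v - p) * x)
  have hG : ∀ x, HasDerivAt G (G' x) x := fun x =>
    (((aux_exp b (q - p) x).const_add a).add (aux_exp c (r - p) x)).add (aux_exp d (v - p) x)
  have key : ∀ x, F x = Real.exp (p * x) * G x := by
    intro x
    have e1 : Real.exp (q * x) = Real.exp (p * x) * Real.exp ((q - p) * x) := by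
      rw [← Real.exp_add]; ring_nf
    have e2 : Real.exp (r * x) = Real.exp (p * x) * Real.exp ((r - p) * x) := by
      rw [← Real.exp_add]; ring_nf
    have e3 : Real.exp (v * x) = Real.exp (p * x) * Real.exp ((v - p) * x) := by
      rw [← Real.exp_add]; ring_nf
    rw [hF, e1, e2, e3]; simp only [G]; ring
  have hz : ∀ x, F x = 0 → G x = 0 := by
    intro x hx
    rw [key] at hx
    exact (mul_eq_zero.1 hx).resolve_left (Real.exp_pos _).ne'
  have pos : ∀ x, 0 < G x → 0 < F x := fun x hx => by
    rw [key]; exact mul_pos (Real.exp_pos _) hx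
  have neg : ∀ x, G x < 0 → F x < 0 := fun x hx => by
    rw [key]; exact mul_neg_of_pos_of_neg (Real.exp_pos _) hx
  have z1 := hz _ h1
  have z2 := hz _ h2
  have z3 := hz _ h3
  obtain ⟨s, hs1, hs2, hs⟩ := aux_rolle G G' hG t1 t2 ht z1 z2
  obtain ⟨w, hw1, hw2, hw⟩ := aux_rolle G G' hG t2 t3 ht' z2 z3
  obtain ⟨A, B, C⟩ := sign3 (q - p) (r - p) (v - p) (b * (q - p)) (c * (r - p)) (d * (v - p))
    s w (by linarith) (by linarith) (mul_pos hd (by linarith)) (by linarith) G'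
    (fun x => rfl) hs hw
  refine ⟨fun x hx => neg x ?_, fun x hx hx' => pos x ?_, fun x hx hx' => neg x ?_,
    fun x hx => pos x ?_⟩
  · have := aux_inc G G' hG x t1 hx (fun z _ hz => A z (by linarith))
    linarith
  · rcases le_or_gt x s with h | h
    · have := aux_inc G G' hG t1 x hx (fun z _ hz => A z (by linarith))
      linarith
    · have := aux_dec G G' hG x t2 hx' (fun z hz _ => B z (by linarith) (by linarith))
      linarith
  · rcases le_or_gt x w with h | h
    · have := aux_dec G G' hG t2 x hx (fun z _ hz => B z (by linarith) (by linarith))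
      linarith
    · have := aux_inc G G' hG x t3 hx' (fun z hz _ => C z (by linarith))
      linarith
  · have := aux_inc G G' hG t3 x hx (fun z hz _ => C z (by linarith))
    linarith

theorem ex2 (p q t : ℝ) : ∃ a b : ℝ, a < 0 ∧ 0 < b ∧
    a * Real.exp (p * t) + b * Real.exp (q * t) = 0 :=
  ⟨-Real.exp (q * t), Real.exp (p * t), neg_lt_zero.2 (Real.exp_pos _), Real.exp_pos _, by ring⟩

theorem ex3 (p q r t1 t2 : ℝ) (hpq : p < q) (hqr : q < r) (ht : t1 < t2) :
    ∃ a b c : ℝ, 0 < a ∧ b < 0 ∧ 0 < c ∧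
    a * Real.exp (p * t1) + b * Real.exp (q * t1) + c * Real.exp (r * t1) = 0 ∧
    a * Real.exp (p * t2) + b * Real.exp (q * t2) + c * Real.exp (r * t2) = 0 := by
  obtain ⟨a, b, ha, hb, h⟩ := ex2 p q t1
  obtain ⟨a', b', ha', hb', h'⟩ := ex2 q r t1
  have P := (sign2 p q a b t1 hpq hb h).2 t2 ht
  have P' := (sign2 q r a' b' t1 hqr hb' h').2 t2 ht
  set A := a * Real.exp (p * t2) + b * Real.exp (q * t2) with hA
  set B := a' * Real.exp (q * t2) + b' * Real.exp (r * t2) with hB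
  refine ⟨-(B * a), A * a' - B * b, A * b', by nlinarith, by nlinarith, by positivity, ?_, ?_⟩
  · linear_combination A * h' - B * h
  · linear_combination B * hA - A * hB

theorem ex4 (p q r v t1 t2 t3 : ℝ) (hpq : p < q) (hqr : q < r) (hrv : r < v)
    (ht : t1 < t2) (ht' : t2 < t3) :
    ∃ a b c d : ℝ, a < 0 ∧ 0 < b ∧ c < 0 ∧ 0 < d ∧
    a * Real.exp (p * t1) + b * Real.exp (q * t1) + c * Real.exp (r * t1)
      + d * Real.exp (v * t1) = 0 ∧
    a * Real.exp (p * t2) + b * Real.exp (q * t2) + c * Real.exp (r * t2)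
      + d * Real.exp (v * t2) = 0 ∧
    a * Real.exp (p * t3) + b * Real.exp (q * t3) + c * Real.exp (r * t3)
      + d * Real.exp (v * t3) = 0 := by
  obtain ⟨a, b, c, ha, hb, hc, h1, h2⟩ := ex3 p q r t1 t2 hpq hqr ht
  obtain ⟨a', b', c', ha', hb', hc', h1', h2'⟩ := ex3 q r v t1 t2 hqr hrv ht
  have P := (sign3 p q r a b c t1 t2 hpq hqr hc ht _ (fun x => rfl) h1 h2).2.2 t3 ht'
  have P' := (sign3 q r v a' b' c' t1 t2 hqr hrv hc' ht _ (fun x => rfl) h1' h2').2.2 t3 ht'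
  set A := a * Real.exp (p * t3) + b * Real.exp (q * t3) + c * Real.exp (r * t3) with hA
  set B := a' * Real.exp (q * t3) + b' * Real.exp (r * t3) + c' * Real.exp (v * t3) with hB
  refine ⟨-(B * a), A * a' - B * b, A * b' - B * c, A * c', by nlinarith, by nlinarith,
    by nlinarith, by positivity, ?_, ?_, ?_⟩
  · linear_combination A * h1' - B * h1
  · linear_combination A * h2' - B * h2
  · linear_combination B * hA - A * hB

/-- The hump-dip-hump shape `HDH` is strongly attainable in the scale-separated
case `2λ₁ < λ₂`: there are coefficients `u₂, u₁ > 0`, `w₁, w₂ < 0` such that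
`l(x) = u₂ e^{−2λ₂x} + w₂ e^{−λ₂x} + u₁ e^{−2λ₁x} + w₁ e^{−λ₁x}` has sign
pattern `(+, −, +, −)` with zeros exactly at the prescribed `r₁ < r₂ < r₃`. -/
theorem HDH_strongly_attainable (lam1 lam2 r1 r2 r3 : ℝ)
    (h1 : 0 < lam1) (h2 : 2 * lam1 < lam2)
    (hr1 : 0 < r1) (hr12 : r1 < r2) (hr23 : r2 < r3) :
    ∃ u2 u1 w1 w2 : ℝ, 0 < u2 ∧ 0 < u1 ∧ w1 < 0 ∧ w2 < 0 ∧
      ∃ l : ℝ → ℝ,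
        (∀ x : ℝ, l x = u2 * Real.exp (-(2 * lam2 * x)) +
          w2 * Real.exp (-(lam2 * x)) + u1 * Real.exp (-(2 * lam1 * x)) +
          w1 * Real.exp (-(lam1 * x))) ∧
        (∀ x : ℝ, 0 ≤ x → x < r1 → 0 < l x) ∧
        (∀ x : ℝ, r1 < x → x < r2 → l x < 0) ∧
        (∀ x : ℝ, r2 < x → x < r3 → 0 < l x) ∧
        (∀ x : ℝ, r3 < x → l x < 0) ∧
        l r1 = 0 ∧ l r2 = 0 ∧ l r3 = 0 := by
  obtain ⟨a, b, c, d, ha, hb, hc, hd, e1, e2, e3⟩ := ex4 (-(2 * lam2)) (-lam2) (-(2 * lam1))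
    (-lam1) r1 r2 r3 (by linarith) (by linarith) (by linarith) hr12 hr23
  obtain ⟨A, B, C, D⟩ := sign4 (-(2 * lam2)) (-lam2) (-(2 * lam1)) (-lam1) a b c d r1 r2 r3
    (by linarith) (by linarith) (by linarith) hd hr12 hr23 _ (fun x => rfl) e1 e2 e3
  refine ⟨-a, -c, -d, -b, by linarith, by linarith, by linarith, by linarith,
    fun x => -(a * Real.exp (-(2 * lam2) * x) + b * Real.exp (-lam2 * x)
      + c * Real.exp (-(2 * lam1) * x) + d * Real.exp (-lam1 * x)), ?_, ?_, ?_, ?_, ?_, ?_, ?_, ?_⟩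
  · intro x
    simp only [neg_mul]
    ring
  · intro x _ hx
    have := A x hx
    simp only at this ⊢
    linarith
  · intro x hx hx'
    have := B x hx hx'
    simp only at this ⊢
    linarith
  · intro x hx hx'
    have := C x hx hx'
    simp only at this ⊢
    linarith
  · intro x hx
    have := D x hx
    simp only at this ⊢
    linarith
  · simp only [e1, neg_zero]
  · simp only [e2, neg_zero]
  · simp only [e3, neg_zero]
end

section
/- Let 0 < λ₁, 2λ₁ < λ₂, and 0 < r₁ < r₂. Then there exist u₁ > 0 and w₁ < 0, w₂ < 0 such that the function l(x) := w₂·e^{−λ₂x} + u₁·e^{−2λ₁x} + w₁·e^{−λ₁x} satisfies: l(x) < 0 for 0 ≤ x < r₁, l(r₁) = 0, l(x) > 0 for r₁ < x < r₂, l(r₂) = 0, and l(x) < 0 for x > r₂. -/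
lemma exp_three_s16 (c x y z : ℝ) (hc : c ≠ 0) (hxy : x < y) (hyz : y < z) :
    (z - x) * Real.exp (c * y) < (z - y) * Real.exp (c * x) + (y - x) * Real.exp (c * z) := by
  have hzx : 0 < z - x := by linarith
  have h := strictConvexOn_exp.2 (Set.mem_univ (c * x)) (Set.mem_univ (c * z))
    (by intro h; have := mul_left_cancel₀ hc h; linarith)
    (div_pos (sub_pos.2 hyz) hzx) (div_pos (sub_pos.2 hxy) hzx) (by field_simp; ring)
  simp only [smul_eq_mul] at h
  have e : (z - y) / (z - x) * (c * x) + (y - x) / (z - x) * (c * z) = c * y := by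
    field_simp; ring
  rw [e] at h
  have hmul := mul_lt_mul_of_pos_left h hzx
  have e2 : (z - x) * ((z - y) / (z - x) * Real.exp (c * x) + (y - x) / (z - x) * Real.exp (c * z))
      = (z - y) * Real.exp (c * x) + (y - x) * Real.exp (c * z) := by
    field_simp
  rw [e2] at hmul; exact hmul

/-- The dip-hump shape `DH` is strongly attainable in the scale-separated case
`2λ₁ < λ₂`: there are `u₁ > 0` and `w₁, w₂ < 0` such that
`l(x) = w₂ e^{−λ₂x} + u₁ e^{−2λ₁x} + w₁ e^{−λ₁x}` has sign pattern `(−, +, −)`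
with zeros exactly at the prescribed `r₁ < r₂`. -/
theorem DH_strongly_attainable (lam1 lam2 r1 r2 : ℝ)
    (h1 : 0 < lam1) (h2 : 2 * lam1 < lam2) (hr1 : 0 < r1) (hr12 : r1 < r2) :
    ∃ u1 w1 w2 : ℝ, 0 < u1 ∧ w1 < 0 ∧ w2 < 0 ∧
      ∃ l : ℝ → ℝ,
        (∀ x : ℝ, l x = w2 * Real.exp (-(lam2 * x)) +
          u1 * Real.exp (-(2 * lam1 * x)) + w1 * Real.exp (-(lam1 * x))) ∧
        (∀ x : ℝ, 0 ≤ x → x < r1 → l x < 0) ∧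
        l r1 = 0 ∧
        (∀ x : ℝ, r1 < x → x < r2 → 0 < l x) ∧
        l r2 = 0 ∧
        (∀ x : ℝ, r2 < x → l x < 0) := by
  obtain ⟨a, ha⟩ : ∃ a, a = -(lam2 - 2 * lam1) := ⟨_, rfl⟩
  have ha0 : a < 0 := by linarith
  have hA : Real.exp (a * r2) < Real.exp (a * r1) := Real.exp_lt_exp.2 (by nlinarith)
  have hB : Real.exp (lam1 * r1) < Real.exp (lam1 * r2) := Real.exp_lt_exp.2 (by nlinarith)
  obtain ⟨p, hp⟩ : ∃ p, p = Real.exp (lam1 * r2) - Real.exp (lam1 * r1) := ⟨_, rfl⟩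
  obtain ⟨q, hq⟩ : ∃ q, q = Real.exp (a * r1) - Real.exp (a * r2) := ⟨_, rfl⟩
  obtain ⟨u, hu⟩ : ∃ u, u = p * Real.exp (a * r1) + q * Real.exp (lam1 * r1) := ⟨_, rfl⟩
  have hp0 : 0 < p := by linarith
  have hq0 : 0 < q := by linarith
  have hu0 : 0 < u := by rw [hu]; positivity
  obtain ⟨G, hG⟩ : ∃ G : ℝ → ℝ, ∀ x, G x = u - p * Real.exp (a * x) - q * Real.exp (lam1 * x) :=
    ⟨_, fun _ => rfl⟩
  have key : ∀ x y z : ℝ, x < y → y < z → (z - y) * G x + (y - x) * G z < (z - x) * G y := by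
    intro x y z hxy hyz
    have e1 := mul_lt_mul_of_pos_left (exp_three_s16 a x y z ha0.ne hxy hyz) hp0
    have e2 := mul_lt_mul_of_pos_left (exp_three_s16 lam1 x y z h1.ne' hxy hyz) hq0
    rw [hG, hG, hG]
    linarith
  have g1 : G r1 = 0 := by rw [hG, hu]; ring
  have g2 : G r2 = 0 := by rw [hG, hu, hp, hq]; ring
  have hE : ∀ x, 0 < Real.exp (-(2 * lam1 * x)) := fun x => Real.exp_pos _
  refine ⟨u, -q, -p, hu0, by linarith, by linarith,
    fun x => Real.exp (-(2 * lam1 * x)) * G x, ?_, ?_, ?_, ?_, ?_, ?_⟩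
  · intro x
    have e1 : Real.exp (-(lam2 * x)) = Real.exp (-(2 * lam1 * x)) * Real.exp (a * x) := by
      rw [← Real.exp_add, ha]; congr 1; ring
    have e2 : Real.exp (-(lam1 * x)) = Real.exp (-(2 * lam1 * x)) * Real.exp (lam1 * x) := by
      rw [← Real.exp_add]; congr 1; ring
    simp only [hG]
    rw [e1, e2]; ring
  · intro x _ hx
    have k := key x r1 r2 hx hr12
    rw [g1, g2] at k
    exact mul_neg_of_pos_of_neg (hE x) (by nlinarith)
  · simp [g1]
  · intro x hx hx2
    have k := key r1 x r2 hx hx2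
    rw [g1, g2] at k
    exact mul_pos (hE x) (by nlinarith)
  · simp [g2]
  · intro x hx
    have k := key r1 r2 x hr12 hx
    rw [g1, g2] at k
    exact mul_neg_of_pos_of_neg (hE x) (by nlinarith)
end

section
/- Let 0 < λ₁ < λ₂ < 2λ₁, κ₁, κ₂ > 0 and θ₁, θ₂ ∈ ℝ. Then there exist σ₁ > 0, σ₂ > 0, ρ ∈ (−1, 0), z₁, z₂ ∈ ℝ and points 0 < r₁ < r₂ < r₃ < r₄ such that, with u_j = σ_j²κ_j²/λ_j, c = ρ(λ₁+λ₂)σ₁σ₂κ₁κ₂/(λ₁λ₂) and w_j = κ_jλ_j(θ_j − z_j) − σ_j²κ_j²/λ_j − ρλ_jσ₁σ₂κ₁κ₂/(λ₁λ₂), the function l(x) := u₂e^{−2λ₂x} + c·e^{−(λ₁+λ₂)x} + w₂e^{−λ₂x} + u₁e^{−2λ₁x} + w₁e^{−λ₁x} satisfies: l(x) > 0 for 0 ≤ x < r₁, l(x) < 0 for r₁ < x < r₂, l(x) > 0 for r₂ < x < r₃, l(x) < 0 for r₃ < x < r₄, l(x) > 0 for x > r₄, and l(rᵢ) = 0 for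 i = 1, 2, 3, 4. -/
lemma cv_pm (f : ℝ → ℝ) (a b : ℝ) (hab : a < b) (hf : ConvexOn ℝ (Set.Icc a b) f)
    (hc : ContinuousOn f (Set.Icc a b)) (ha : 0 < f a) (hb : f b < 0) :
    ∃ r, a < r ∧ r < b ∧ f r = 0 ∧ (∀ x, a ≤ x → x < r → 0 < f x) ∧
      (∀ x, r < x → x ≤ b → f x < 0) := by
  obtain ⟨r, ⟨h1, h2⟩, h0⟩ := intermediate_value_Icc' hab.le hc (show (0:ℝ) ∈ Set.Icc (f b) (f a) from ⟨hb.le, ha.le⟩)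
  have h1' : a < r := lt_of_le_of_ne h1 (by rintro rfl; linarith)
  have h2' : r < b := lt_of_le_of_ne h2 (by rintro rfl; linarith)
  refine ⟨r, h1', h2', h0, ?_, ?_⟩
  · intro x hx hxr
    by_contra! hneg
    have h := hf.2 (show x ∈ Set.Icc a b from ⟨hx, by linarith⟩)
      (show b ∈ Set.Icc a b from ⟨by linarith, le_rfl⟩)
      (show 0 ≤ (b - r) / (b - x) from div_nonneg (by linarith) (by linarith))
      (show 0 ≤ (r - x) / (b - x) from div_nonneg (by linarith) (by linarith))
      (by have : b - x ≠ 0 := by linarith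
          field_simp; ring)
    have e : ((b - r) / (b - x)) • x + ((r - x) / (b - x)) • b = r := by
      have : b - x ≠ 0 := by linarith
      simp only [smul_eq_mul]; field_simp; ring
    rw [e, h0] at h
    simp only [smul_eq_mul] at h
    have p1 : 0 < (b - r) / (b - x) := div_pos (by linarith) (by linarith)
    have p2 : 0 < (r - x) / (b - x) := div_pos (by linarith) (by linarith)
    nlinarith
  · intro x hx hxb
    have h := hf.2 (show r ∈ Set.Icc a b from ⟨h1, h2⟩)
      (show b ∈ Set.Icc a b from ⟨by linarith, le_rfl⟩)
      (show 0 ≤ (b - x) / (b - r) from div_nonneg (by linarith) (by linarith))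
      (show 0 ≤ (x - r) / (b - r) from div_nonneg (by linarith) (by linarith))
      (by have : b - r ≠ 0 := by linarith
          field_simp; ring)
    have e : ((b - x) / (b - r)) • r + ((x - r) / (b - r)) • b = x := by
      have : b - r ≠ 0 := by linarith
      simp only [smul_eq_mul]; field_simp; ring
    rw [e, h0] at h
    simp only [smul_eq_mul] at h
    have p2 : 0 < (x - r) / (b - r) := div_pos (by linarith) (by linarith)
    nlinarith

lemma cv_mp (f : ℝ → ℝ) (a b : ℝ) (hab : a < b) (hf : ConvexOn ℝ (Set.Icc a b) f)
    (hc : ContinuousOn f (Set.Icc a b)) (ha : f a < 0) (hb : 0 < f b) :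
    ∃ r, a < r ∧ r < b ∧ f r = 0 ∧ (∀ x, a ≤ x → x < r → f x < 0) ∧
      (∀ x, r < x → x ≤ b → 0 < f x) := by
  have hm : Set.MapsTo (fun x : ℝ => -x) (Set.Icc (-b) (-a)) (Set.Icc a b) :=
    fun x hx => ⟨by linarith [hx.2], by linarith [hx.1]⟩
  obtain ⟨r, h1, h2, h3, h4, h5⟩ := cv_pm (fun x => f (-x)) (-b) (-a) (by linarith)
    ⟨convex_Icc _ _, by
      intro x hx y hy s t hs ht hst
      have := hf.2 (hm hx) (hm hy) hs ht hst
      simp only [smul_eq_mul] at this ⊢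
      convert this using 2
      ring⟩
    (hc.comp continuous_neg.continuousOn hm) (by simpa using hb) (by simpa using ha)
  refine ⟨-r, by linarith, by linarith, h3, ?_, ?_⟩
  · intro x hx hxr
    simpa using h5 (-x) (by linarith) (by linarith)
  · intro x hx hxr
    simpa using h4 (-x) (by linarith) (by linarith)

set_option maxHeartbeats 2000000 in
lemma core_s17 (p : ℝ) (hp : 1 < p) : ∃ u1 u2 c α β B a1 a2 a3 a4 : ℝ,
    0 < u1 ∧ 0 < u2 ∧ c < 0 ∧ c ^ 2 < 4 * u1 * u2 ∧ 0 < a1 ∧ a1 < a2 ∧ a2 < a3 ∧ a3 < a4 ∧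
    a4 < B ∧ ∃ G : ℝ → ℝ,
      (∀ s, G s = u1 * s ^ p + c * s ^ (p + 1) + u2 * s ^ (p + 2) + α + β * s) ∧
      (∀ s, 0 < s → s < a1 → 0 < G s) ∧ (∀ s, a1 < s → s < a2 → G s < 0) ∧
      (∀ s, a2 < s → s < a3 → 0 < G s) ∧ (∀ s, a3 < s → s < a4 → G s < 0) ∧
      (∀ s, a4 < s → s ≤ B → 0 < G s) ∧ G a1 = 0 ∧ G a2 = 0 ∧ G a3 = 0 ∧ G a4 = 0 := by
  obtain ⟨η, hη0, hη⟩ : ∃ η : ℝ, 0 < η ∧ (p + 1) * η < 1 :=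
    ⟨1 / (2 * (p + 1)), by positivity, by
      have : p + 1 ≠ 0 := by linarith
      field_simp; norm_num⟩
  have hη1 : η < 1 := by nlinarith
  have hη2 : (p + 1) ^ 2 * η ^ 2 < 1 := by
    have : 0 < (p + 1) * η := by positivity
    nlinarith
  have hη3 : η ^ 2 < 1 := by nlinarith
  obtain ⟨u1, hu1⟩ : ∃ u1, u1 = (p + 2) * (p + 1) * (1 - η ^ 2) := ⟨_, rfl⟩
  obtain ⟨u2, hu2⟩ : ∃ u2, u2 = p * (p - 1) := ⟨_, rfl⟩
  obtain ⟨c, hcc⟩ : ∃ c, c = -2 * (p + 2) * (p - 1) := ⟨_, rfl⟩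
  have hu1p : 0 < u1 := by
    rw [hu1]; have : 0 < 1 - η ^ 2 := by linarith
    positivity
  have hp1 : 0 < p - 1 := by linarith
  have hu2p : 0 < u2 := by rw [hu2]; positivity
  have hcn : c < 0 := by
    have : 0 < (p + 2) * (p - 1) := by positivity
    rw [hcc]; linarith
  have hkey : p * (p + 2) < (p + 1) ^ 2 * (1 - η ^ 2) := by nlinarith
  have hdisc : c ^ 2 < 4 * u1 * u2 := by
    have h : (p + 2) * (p - 1) < p * (p + 1) * (1 - η ^ 2) := by
      by_contra! hh
      have h1 : (p + 1) * (p * (p + 1) * (1 - η ^ 2)) ≤ (p + 1) * ((p + 2) * (p - 1)) :=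
        mul_le_mul_of_nonneg_left hh (by linarith)
      have h2 : p * (p * (p + 2)) < p * ((p + 1) ^ 2 * (1 - η ^ 2)) :=
        mul_lt_mul_of_pos_left hkey (by linarith)
      nlinarith
    have h4 : 0 < 4 * (p + 2) * (p - 1) := by positivity
    rw [hcc, hu1, hu2]
    have := mul_lt_mul_of_pos_left h h4
    nlinarith
  obtain ⟨D, hD⟩ : ∃ D, D = u1 * p + c * (p + 1) + u2 * (p + 2) := ⟨_, rfl⟩
  let H : ℝ → ℝ := fun s => u1 * s ^ p + c * s ^ (p + 1) + u2 * s ^ (p + 2)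
    - (u1 + c + u2) - D * (s - 1)
  let dH : ℝ → ℝ := fun s => u1 * (p * s ^ (p - 1)) + c * ((p + 1) * s ^ p)
    + u2 * ((p + 2) * s ^ (p + 1)) - D
  let ddH : ℝ → ℝ := fun s => (p * (p - 1) * (p + 1) * (p + 2)) * s ^ (p - 2) * ((s - 1) ^ 2 - η ^ 2)
  have hH1 : ∀ s, 0 < s → HasDerivAt H (dH s) s := by
    intro s hs
    have e1 := (Real.hasDerivAt_rpow_const (x := s) (p := p) (Or.inl hs.ne')).const_mul u1
    have e2 := (Real.hasDerivAt_rpow_const (x := s) (p := p + 1) (Or.inl hs.ne')).const_mul c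
    have e3 := (Real.hasDerivAt_rpow_const (x := s) (p := p + 2) (Or.inl hs.ne')).const_mul u2
    have e4 := ((hasDerivAt_id s).sub_const 1).const_mul D
    have := (((e1.add e2).add e3).sub_const (u1 + c + u2)).sub e4
    refine HasDerivAt.congr_deriv (f := H) this ?_
    simp only [dH]
    rw [show p + 1 - 1 = p by ring, show p + 2 - 1 = p + 1 by ring]; ring
  have hH2 : ∀ s, 0 < s → HasDerivAt dH (ddH s) s := by
    intro s hs
    have e1 := ((Real.hasDerivAt_rpow_const (x := s) (p := p - 1) (Or.inl hs.ne')).const_mul p).const_mul u1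
    have e2 := ((Real.hasDerivAt_rpow_const (x := s) (p := p) (Or.inl hs.ne')).const_mul (p + 1)).const_mul c
    have e3 := ((Real.hasDerivAt_rpow_const (x := s) (p := p + 1) (Or.inl hs.ne')).const_mul (p + 2)).const_mul u2
    have := ((e1.add e2).add e3).sub_const D
    refine HasDerivAt.congr_deriv (f := dH) this ?_
    simp only [ddH]
    rw [show p + 1 - 1 = (p - 2) + 1 + 1 by ring, show p - 1 - 1 = p - 2 by ring,
      show p - 1 = p - 2 + 1 by ring, Real.rpow_add_one hs.ne' (p - 2 + 1),
      Real.rpow_add_one hs.ne', hu1, hu2, hcc]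
    ring
  have hcont : Continuous H := by
    have : ∀ q : ℝ, 0 ≤ q → Continuous fun s : ℝ => s ^ q :=
      fun q hq => continuous_id.rpow_const (fun _ => Or.inr hq)
    have := this p (by linarith)
    have := ‹∀ q : ℝ, 0 ≤ q → Continuous fun s : ℝ => s ^ q› (p + 1) (by linarith)
    have := ‹∀ q : ℝ, 0 ≤ q → Continuous fun s : ℝ => s ^ q› (p + 2) (by linarith)
    simp only [H]
    fun_prop
  have hK : 0 < p * (p - 1) * (p + 1) * (p + 2) := by positivity
  have hconv : ∀ a b, 0 ≤ a → (∀ s, a < s → s < b → 0 ≤ (s - 1) ^ 2 - η ^ 2) →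
      ConvexOn ℝ (Set.Icc a b) H := by
    intro a b ha hs
    refine convexOn_of_hasDerivWithinAt2_nonneg (f' := dH) (f'' := ddH) (convex_Icc a b)
      hcont.continuousOn ?_ ?_ ?_ <;> rw [interior_Icc] <;> intro x hx
    · exact (hH1 x (by linarith [hx.1])).hasDerivWithinAt
    · exact (hH2 x (by linarith [hx.1])).hasDerivWithinAt
    · have hx0 : 0 < x := by linarith [hx.1]
      exact mul_nonneg (mul_nonneg hK.le (Real.rpow_nonneg hx0.le _)) (hs x hx.1 hx.2)
  have hs1 : 0 < 1 - η := by linarith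
  have hanti : StrictAntiOn dH (Set.Icc (1 - η) (1 + η)) := by
    refine strictAntiOn_of_hasDerivWithinAt_neg (f' := ddH) (convex_Icc _ _) ?_ ?_ ?_
    · intro x hx
      exact (hH2 x (by linarith [hx.1])).continuousAt.continuousWithinAt
    · rw [interior_Icc]; intro x hx
      exact (hH2 x (by linarith [hx.1])).hasDerivWithinAt
    · rw [interior_Icc]; intro x hx
      have hx0 : 0 < x := by linarith [hx.1]
      refine mul_neg_of_pos_of_neg (mul_pos hK (Real.rpow_pos_of_pos hx0 _)) ?_
      nlinarith [hx.1, hx.2]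
  have hconc : ConcaveOn ℝ (Set.Icc (1 - η) (1 + η)) H := by
    refine AntitoneOn.concaveOn_of_deriv (convex_Icc _ _) hcont.continuousOn ?_ ?_
    · rw [interior_Icc]; intro x hx
      exact (hH1 x (by linarith [hx.1])).differentiableAt.differentiableWithinAt
    · rw [interior_Icc]; intro x hx y hy hxy
      rw [(hH1 x (by linarith [hx.1])).deriv, (hH1 y (by linarith [hy.1])).deriv]
      exact hanti.antitoneOn (Set.Ioo_subset_Icc_self hx) (Set.Ioo_subset_Icc_self hy) hxy
  have hH'1 : dH 1 = 0 := by simp only [dH, Real.one_rpow, hD]; ring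
  have hH01 : H 1 = 0 := by simp only [H, Real.one_rpow]; ring
  have hHl : H (1 - η) < 0 := by
    rw [← hH01]
    refine strictMonoOn_of_hasDerivWithinAt_pos (f' := dH) (convex_Icc (1 - η) 1)
      hcont.continuousOn ?_ ?_ ⟨le_rfl, by linarith⟩ ⟨by linarith, le_rfl⟩ (by linarith)
    · rw [interior_Icc]; intro x hx
      exact (hH1 x (by linarith [hx.1])).hasDerivWithinAt
    · rw [interior_Icc]; intro x hx
      rw [← hH'1]
      exact hanti ⟨hx.1.le, by linarith [hx.2]⟩ ⟨by linarith, by linarith⟩ hx.2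
  have hHr : H (1 + η) < 0 := by
    rw [← hH01]
    refine strictAntiOn_of_hasDerivWithinAt_neg (f' := dH) (convex_Icc 1 (1 + η))
      hcont.continuousOn ?_ ?_ ⟨le_rfl, by linarith⟩ ⟨by linarith, le_rfl⟩ (by linarith)
    · rw [interior_Icc]; intro x hx
      exact (hH1 x (by linarith [hx.1])).hasDerivWithinAt
    · rw [interior_Icc]; intro x hx
      rw [← hH'1]
      exact hanti ⟨by linarith, by linarith⟩ ⟨by linarith [hx.1], hx.2.le⟩ hx.1
  have hH0 : 0 < H 0 := by
    simp only [H]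
    rw [Real.zero_rpow (by linarith), Real.zero_rpow (by linarith), Real.zero_rpow (by linarith), hD]
    have : 0 < (p - 1) * u1 + p * c + (p + 1) * u2 := by
      have h2 : 0 < (p + 2) * (p - 1) * ((p + 1) ^ 2 * (1 - η ^ 2) - p * (p + 2)) :=
        mul_pos (by positivity) (by linarith)
      have h3 : (p + 1) * ((p - 1) * u1 + p * c + (p + 1) * u2) =
        (p + 2) * (p - 1) * ((p + 1) ^ 2 * (1 - η ^ 2) - p * (p + 2)) + p * (p - 1) := by
        rw [hu1, hu2, hcc]; ring
      have h4 : 0 < p * (p - 1) := by positivity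
      have : 0 < (p + 1) * ((p - 1) * u1 + p * c + (p + 1) * u2) := by rw [h3]; linarith
      exact pos_of_mul_pos_right this (by linarith)
    linarith
  obtain ⟨B, hB1, hHB⟩ : ∃ B, 1 + η < B ∧ 0 < H B := by
    obtain ⟨K, hKd⟩ : ∃ K, K = |u1 + c + u2| + 2 * |D| + 1 := ⟨_, rfl⟩
    have hKpos : 0 < K := by rw [hKd]; positivity
    refine ⟨1 + η + 1 + (K - c) / u2, ?_, ?_⟩
    · have : 0 < (K - c) / u2 := div_pos (by linarith) hu2p
      linarith
    · have hq : 0 < (K - c) / u2 := div_pos (by linarith) hu2p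
      have hq2 : u2 * ((K - c) / u2) = K - c := by field_simp
      generalize (K - c) / u2 = q at *
      obtain ⟨s, hs⟩ : ∃ s, s = 1 + η + 1 + q := ⟨_, rfl⟩
      rw [← hs]
      have hs1 : 1 < s := by linarith
      have hlin : K ≤ c + u2 * s := by rw [hs]; nlinarith
      have hpow : 1 ≤ s ^ p := Real.one_le_rpow hs1.le (by linarith)
      simp only [H]
      rw [show p + 2 = p + 1 + 1 by ring, Real.rpow_add_one (by linarith) (p + 1),
        Real.rpow_add_one (by linarith) p]
      have h5 : K * s ≤ s ^ p * (s * (c + u2 * s)) := by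
        have : K * s ≤ s * (c + u2 * s) := by nlinarith
        have h0 : 0 < K * s := by positivity
        exact this.trans (le_mul_of_one_le_left (h0.le.trans this) hpow)
      have h6 : 0 < u1 * s ^ p := by positivity
      have h7 := le_abs_self (u1 + c + u2)
      have h8 : D * (s - 1) ≤ |D| * s := by
        have := le_abs_self D
        have h9 := abs_nonneg D
        nlinarith
      have h10 : K * s = |u1 + c + u2| * s + 2 * (|D| * s) + s := by rw [hKd]; ring
      have h11 : |u1 + c + u2| ≤ |u1 + c + u2| * s := by nlinarith [abs_nonneg (u1 + c + u2)]
      have h12 : 0 ≤ |D| * s := by positivity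
      have h13 : s ^ p * (s * (c + u2 * s)) = c * (s ^ p * s) + u2 * (s ^ p * s * s) := by ring
      linarith
  obtain ⟨ε, hε0, hεl, hεr⟩ : ∃ ε : ℝ, 0 < ε ∧ H (1 - η) + ε < 0 ∧ H (1 + η) + ε < 0 := by
    refine ⟨min (-H (1 - η)) (-H (1 + η)) / 2, ?_, ?_, ?_⟩
    · have : 0 < min (-H (1 - η)) (-H (1 + η)) := lt_min (by linarith) (by linarith)
      linarith
    · have := min_le_left (-H (1 - η)) (-H (1 + η))
      linarith
    · have := min_le_right (-H (1 - η)) (-H (1 + η))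
      linarith
  have hGc : Continuous (fun s => H s + ε) := hcont.add continuous_const
  have hGn : Continuous (fun s => -(H s + ε)) := hGc.neg
  have hcn' : ConvexOn ℝ (Set.Icc (1 - η) (1 + η)) (fun s => -(H s + ε)) :=
    (hconc.add_const ε).neg
  obtain ⟨a1, p1, q1, z1, l1, m1⟩ := cv_pm (fun s => H s + ε) 0 (1 - η) hs1
    ((hconv 0 (1 - η) le_rfl (fun s _ hs => by nlinarith)).add_const ε) hGc.continuousOn
    (by linarith) hεl
  obtain ⟨a2, p2, q2, z2, l2, m2⟩ := cv_pm (fun s => -(H s + ε)) (1 - η) 1 (by linarith)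
    (hcn'.subset (Set.Icc_subset_Icc le_rfl (by linarith)) (convex_Icc _ _)) hGn.continuousOn
    (by linarith) (by linarith)
  obtain ⟨a3, p3, q3, z3, l3, m3⟩ := cv_mp (fun s => -(H s + ε)) 1 (1 + η) (by linarith)
    (hcn'.subset (Set.Icc_subset_Icc (by linarith) le_rfl) (convex_Icc _ _)) hGn.continuousOn
    (by linarith) (by linarith)
  obtain ⟨a4, p4, q4, z4, l4, m4⟩ := cv_mp (fun s => H s + ε) (1 + η) B hB1
    ((hconv (1 + η) B (by linarith) (fun s hs _ => by nlinarith)).add_const ε) hGc.continuousOn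
    hεr (by linarith)
  refine ⟨u1, u2, c, -(u1 + c + u2) + D + ε, -D, B, a1, a2, a3, a4, hu1p, hu2p, hcn, hdisc, p1,
    by linarith, by linarith, by linarith, q4, fun s => H s + ε, ?_, ?_, ?_, ?_, ?_, ?_, z1,
    by linarith, by linarith, z4⟩
  · intro s; simp only [H]; ring
  · intro s h h'; exact l1 s h.le h'
  · intro s h h'
    rcases le_total s (1 - η) with hh | hh
    · exact m1 s h hh
    · linarith [l2 s hh h']
  · intro s h h'
    rcases le_total s 1 with hh | hh
    · linarith [m2 s h hh]
    · linarith [l3 s hh h']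
  · intro s h h'
    rcases le_total s (1 + η) with hh | hh
    · linarith [m3 s h hh]
    · exact l4 s hh h'
  · intro s h h'; exact m4 s h h'

lemma params (l1 l2 k1 k2 u1 u2 c : ℝ) (hl1 : 0 < l1) (hl2 : 0 < l2) (hk1 : 0 < k1)
    (hk2 : 0 < k2) (hu1 : 0 < u1) (hu2 : 0 < u2) (hc : c < 0) (h : c ^ 2 < 4 * u1 * u2) :
    ∃ s1 s2 rho : ℝ, 0 < s1 ∧ 0 < s2 ∧ -1 < rho ∧ rho < 0 ∧ u1 = s1 ^ 2 * k1 ^ 2 / l1 ∧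
      u2 = s2 ^ 2 * k2 ^ 2 / l2 ∧ c = rho * (l1 + l2) * s1 * s2 * k1 * k2 / (l1 * l2) := by
  obtain ⟨S1, hS1, e1⟩ : ∃ S, 0 < S ∧ S ^ 2 = l1 * u1 :=
    ⟨√(l1 * u1), by positivity, Real.sq_sqrt (by positivity)⟩
  obtain ⟨S2, hS2, e2⟩ : ∃ S, 0 < S ∧ S ^ 2 = l2 * u2 :=
    ⟨√(l2 * u2), by positivity, Real.sq_sqrt (by positivity)⟩
  have hd : 0 < (l1 + l2) * S1 * S2 := by positivity
  refine ⟨S1 / k1, S2 / k2, c * (l1 * l2) / ((l1 + l2) * S1 * S2), by positivity, by positivity,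
    ?_, ?_, ?_, ?_, ?_⟩
  · rw [lt_div_iff₀ hd]
    have h1 : (-c * (l1 * l2)) ^ 2 < ((l1 + l2) * S1 * S2) ^ 2 := by
      have e : ((l1 + l2) * S1 * S2) ^ 2 = (l1 + l2) ^ 2 * (l1 * l2) * (u1 * u2) := by
        rw [mul_pow, mul_pow, e1, e2]; ring
      rw [e]
      have hp : 0 < l1 * l2 := by positivity
      have huu : 0 < u1 * u2 := by positivity
      have a1 : (l1 * l2) ^ 2 * c ^ 2 < (l1 * l2) ^ 2 * (4 * u1 * u2) :=
        mul_lt_mul_of_pos_left h (by positivity)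
      have a2 : 0 ≤ (l1 - l2) ^ 2 * (l1 * l2) * (u1 * u2) := by positivity
      nlinarith
    have := lt_of_pow_lt_pow_left₀ 2 hd.le h1
    linarith
  · exact div_neg_of_neg_of_pos (mul_neg_of_neg_of_pos hc (by positivity)) hd
  · field_simp; linarith
  · field_simp; linarith
  · field_simp


/-- In the scale-proximal case `λ₁ < λ₂ < 2λ₁`, the hump-dip-hump-dip shape
`HDHD` of the forward curve is attainable with strictly negative correlation:
there are volatilities `σ₁, σ₂ > 0`, a correlation `ρ ∈ (−1,0)`, a state
`(z₁, z₂)` and points `0 < r₁ < r₂ < r₃ < r₄` such that the forward-curve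
derivative `l` has sign pattern `(+, −, +, −, +)` with zeros at the `rᵢ`. -/
theorem HDHD_attainable (lam1 lam2 kap1 kap2 th1 th2 : ℝ)
    (h1 : 0 < lam1) (h2 : lam1 < lam2) (h3 : lam2 < 2 * lam1)
    (hkap1 : 0 < kap1) (hkap2 : 0 < kap2) :
    ∃ sig1 sig2 rho z1 z2 r1 r2 r3 r4 : ℝ,
      0 < sig1 ∧ 0 < sig2 ∧ -1 < rho ∧ rho < 0 ∧
      0 < r1 ∧ r1 < r2 ∧ r2 < r3 ∧ r3 < r4 ∧
      ∃ u1 u2 c w1 w2 : ℝ,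
        u1 = sig1 ^ 2 * kap1 ^ 2 / lam1 ∧
        u2 = sig2 ^ 2 * kap2 ^ 2 / lam2 ∧
        c = rho * (lam1 + lam2) * sig1 * sig2 * kap1 * kap2 / (lam1 * lam2) ∧
        w1 = kap1 * lam1 * (th1 - z1) - sig1 ^ 2 * kap1 ^ 2 / lam1 -
          rho * lam1 * sig1 * sig2 * kap1 * kap2 / (lam1 * lam2) ∧
        w2 = kap2 * lam2 * (th2 - z2) - sig2 ^ 2 * kap2 ^ 2 / lam2 -
          rho * lam2 * sig1 * sig2 * kap1 * kap2 / (lam1 * lam2) ∧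
        ∃ l : ℝ → ℝ,
          (∀ x : ℝ, l x = u2 * Real.exp (-(2 * lam2 * x)) +
            c * Real.exp (-((lam1 + lam2) * x)) + w2 * Real.exp (-(lam2 * x)) +
            u1 * Real.exp (-(2 * lam1 * x)) + w1 * Real.exp (-(lam1 * x))) ∧
          (∀ x : ℝ, 0 ≤ x → x < r1 → 0 < l x) ∧
          (∀ x : ℝ, r1 < x → x < r2 → l x < 0) ∧
          (∀ x : ℝ, r2 < x → x < r3 → 0 < l x) ∧
          (∀ x : ℝ, r3 < x → x < r4 → l x < 0) ∧
          (∀ x : ℝ, r4 < x → 0 < l x) ∧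
          l r1 = 0 ∧ l r2 = 0 ∧ l r3 = 0 ∧ l r4 = 0 := by

  have hd : 0 < lam2 - lam1 := by linarith
  have h20 : 0 < lam2 := by linarith
  obtain ⟨d, hdd⟩ : ∃ d, d = lam2 - lam1 := ⟨_, rfl⟩
  rw [← hdd] at hd
  obtain ⟨p, hpd⟩ : ∃ p, p = lam1 / d := ⟨_, rfl⟩
  have hpm : d * p = lam1 := by rw [hpd]; field_simp
  have hp : 1 < p := by rw [hpd, lt_div_iff₀ hd]; linarith
  obtain ⟨u1, u2, c, α, β, B, a1, a2, a3, a4, hu1, hu2, hc, hdisc, ha1, ha2, ha3, ha4, haB, G,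
    hG, g0, g1, g2, g3, g4, e1, e2, e3, e4⟩ := core_s17 p hp
  have hB : 0 < B := by linarith
  have hBp : 0 < B ^ p := Real.rpow_pos_of_pos hB p
  have hdisc' : (c * (B ^ p * B)) ^ 2 < 4 * (u1 * B ^ p) * (u2 * (B ^ p * B * B)) := by
    have : 0 < (B ^ p * B) ^ 2 := by positivity
    nlinarith
  obtain ⟨s1, s2, rho, hs1, hs2, hr1, hr2, E1, E2, E3⟩ := params lam1 lam2 kap1 kap2
    (u1 * B ^ p) (u2 * (B ^ p * B * B)) (c * (B ^ p * B)) h1 h20 hkap1 hkap2 (by positivity)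
    (by positivity) (mul_neg_of_neg_of_pos hc (by positivity)) hdisc'
  have hlt : ∀ x a : ℝ, 0 < a → (x < Real.log (B / a) / d ↔ a < B * Real.exp (-(d * x))) := by
    intro x a ha
    rw [lt_div_iff₀ hd, Real.lt_log_iff_exp_lt (by positivity), lt_div_iff₀ ha, Real.exp_neg,
      ← div_eq_mul_inv, lt_div_iff₀ (Real.exp_pos _), mul_comm x d, mul_comm a]
  have hgt : ∀ x a : ℝ, 0 < a → (Real.log (B / a) / d < x ↔ B * Real.exp (-(d * x)) < a) := by
    intro x a ha
    rw [div_lt_iff₀ hd, Real.log_lt_iff_lt_exp (by positivity), div_lt_iff₀ ha, Real.exp_neg,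
      ← div_eq_mul_inv, div_lt_iff₀ (Real.exp_pos _), mul_comm x d, mul_comm a]
  have heq : ∀ a : ℝ, 0 < a → B * Real.exp (-(d * (Real.log (B / a) / d))) = a := by
    intro a ha
    rw [mul_div_cancel₀ _ hd.ne', Real.exp_neg, Real.exp_log (by positivity)]
    field_simp
  have hmono : ∀ a b : ℝ, 0 < a → a < b → Real.log (B / b) / d < Real.log (B / a) / d := by
    intro a b ha hab
    rw [hlt _ a ha, heq b (by linarith)]
    exact hab
  have ha2p : 0 < a2 := by linarith
  have ha3p : 0 < a3 := by linarith
  have ha4p : 0 < a4 := by linarith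
  have hl : ∀ x : ℝ, (u2 * (B ^ p * B * B)) * Real.exp (-(2 * lam2 * x)) +
            (c * (B ^ p * B)) * Real.exp (-((lam1 + lam2) * x)) +
            (β * B) * Real.exp (-(lam2 * x)) +
            (u1 * B ^ p) * Real.exp (-(2 * lam1 * x)) + α * Real.exp (-(lam1 * x)) =
            Real.exp (-(lam1 * x)) * G (B * Real.exp (-(d * x))) := by
    intro x
    have hs : 0 < B * Real.exp (-(d * x)) := by positivity
    rw [hG, show p + 2 = p + 1 + 1 by ring, Real.rpow_add_one hs.ne' (p + 1),
      Real.rpow_add_one hs.ne' p, Real.mul_rpow hB.le (Real.exp_pos _).le, ← Real.exp_mul,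
      show -(d * x) * p = -(lam1 * x) by rw [← hpm]; ring,
      show -(2 * lam2 * x) = -(lam1 * x) + -(lam1 * x) + -(d * x) + -(d * x) by rw [hdd]; ring,
      show -((lam1 + lam2) * x) = -(lam1 * x) + -(lam1 * x) + -(d * x) by rw [hdd]; ring,
      show -(lam2 * x) = -(lam1 * x) + -(d * x) by rw [hdd]; ring,
      show -(2 * lam1 * x) = -(lam1 * x) + -(lam1 * x) by ring]
    simp only [Real.exp_add]
    ring
  refine ⟨s1, s2, rho,
    th1 - (α + s1 ^ 2 * kap1 ^ 2 / lam1 +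
      rho * lam1 * s1 * s2 * kap1 * kap2 / (lam1 * lam2)) / (kap1 * lam1),
    th2 - (β * B + s2 ^ 2 * kap2 ^ 2 / lam2 +
      rho * lam2 * s1 * s2 * kap1 * kap2 / (lam1 * lam2)) / (kap2 * lam2),
    Real.log (B / a4) / d, Real.log (B / a3) / d, Real.log (B / a2) / d, Real.log (B / a1) / d,
    hs1, hs2, hr1, hr2, ?_, hmono _ _ ha3p ha4, hmono _ _ ha2p ha3, hmono _ _ ha1 ha2,
    u1 * B ^ p, u2 * (B ^ p * B * B), c * (B ^ p * B), α, β * B, E1, E2, E3, ?_, ?_, _,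
    fun x => rfl, ?_⟩
  · rw [hlt _ _ ha4p]; simpa using haB
  · rw [sub_sub_cancel, mul_div_cancel₀ _ (by positivity)]; ring
  · rw [sub_sub_cancel, mul_div_cancel₀ _ (by positivity)]; ring
  · simp only [hl]
    refine ⟨?_, ?_, ?_, ?_, ?_, ?_, ?_, ?_, ?_⟩
    · intro x hx hxr
      refine mul_pos (Real.exp_pos _) (g4 _ ((hlt _ _ ha4p).1 hxr) ?_)
      have : Real.exp (-(d * x)) ≤ 1 := Real.exp_le_one_iff.2 (by nlinarith)
      nlinarith
    · intro x hx hxr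
      exact mul_neg_of_pos_of_neg (Real.exp_pos _)
        (g3 _ ((hlt _ _ ha3p).1 hxr) ((hgt _ _ ha4p).1 hx))
    · intro x hx hxr
      exact mul_pos (Real.exp_pos _) (g2 _ ((hlt _ _ ha2p).1 hxr) ((hgt _ _ ha3p).1 hx))
    · intro x hx hxr
      exact mul_neg_of_pos_of_neg (Real.exp_pos _)
        (g1 _ ((hlt _ _ ha1).1 hxr) ((hgt _ _ ha2p).1 hx))
    · intro x hx
      exact mul_pos (Real.exp_pos _) (g0 _ (by positivity) ((hgt _ _ ha1).1 hx))
    · rw [heq _ ha4p, e4, mul_zero]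
    · rw [heq _ ha3p, e3, mul_zero]
    · rw [heq _ ha2p, e2, mul_zero]
    · rw [heq _ ha1, e1, mul_zero]
end

section
/- Let 0 < λ₁ < λ₂, κ₁, κ₂ > 0 and θ₁, θ₂ ∈ ℝ, and let A₁ > 0, A₂ > 0 and C, W₁, W₂ ∈ ℝ be given. Then there exists (σ₁, σ₂, ρ, z₁, z₂) ∈ [0,∞) × [0,∞) × [−1,1] × ℝ × ℝ satisfying the system σ₁²κ₁²/λ₁ = A₁, σ₂²κ₂²/λ₂ = A₂, ρ(λ₁+λ₂)σ₁σ₂κ₁κ₂/(λ₁λ₂) = C, κ₁λ₁(θ₁ − z₁) − σ₁²κ₁²/λ₁ − ρλ₁σ₁σ₂κ₁κ₂/(λ₁λ₂) = W₁, and κ₂λ₂(θ₂ − z₂) − σ₂²κ₂²/λ₂ − ρλ₂σ₁σ₂κ₁κ₂/(λ₁λ₂) = W₂, if and only if (√(λ₁λ₂)/(λ₁+λ₂))·C/√(A₁·A₂) lies in the interval [−1, 1]. -/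
/-- Solvability of the coefficient-matching system for the two-factor Vasicek
model: given targets `A₁, A₂ > 0` and `C, W₁, W₂ ∈ ℝ`, the system has a
solution `(σ₁, σ₂, ρ, z₁, z₂) ∈ [0,∞)² × [−1,1] × ℝ²` if and only if
`(√(λ₁λ₂)/(λ₁+λ₂))·C/√(A₁A₂) ∈ [−1,1]`. -/
theorem key_system_solvable (lam1 lam2 kap1 kap2 th1 th2 A1 A2 C W1 W2 : ℝ)
    (h1 : 0 < lam1) (h2 : lam1 < lam2)
    (hkap1 : 0 < kap1) (hkap2 : 0 < kap2)
    (hA1 : 0 < A1) (hA2 : 0 < A2) :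
    (∃ sig1 sig2 rho z1 z2 : ℝ,
      0 ≤ sig1 ∧ 0 ≤ sig2 ∧ rho ∈ Set.Icc (-1 : ℝ) 1 ∧
      sig1 ^ 2 * kap1 ^ 2 / lam1 = A1 ∧
      sig2 ^ 2 * kap2 ^ 2 / lam2 = A2 ∧
      rho * (lam1 + lam2) * sig1 * sig2 * kap1 * kap2 / (lam1 * lam2) = C ∧
      kap1 * lam1 * (th1 - z1) - sig1 ^ 2 * kap1 ^ 2 / lam1 -
        rho * lam1 * sig1 * sig2 * kap1 * kap2 / (lam1 * lam2) = W1 ∧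
      kap2 * lam2 * (th2 - z2) - sig2 ^ 2 * kap2 ^ 2 / lam2 -
        rho * lam2 * sig1 * sig2 * kap1 * kap2 / (lam1 * lam2) = W2) ↔
    Real.sqrt (lam1 * lam2) / (lam1 + lam2) * C / Real.sqrt (A1 * A2) ∈
      Set.Icc (-1 : ℝ) 1 := by
  have hl2 : 0 < lam2 := h1.trans h2
  have hL : 0 < lam1 * lam2 := mul_pos h1 hl2
  have hA : 0 < A1 * A2 := mul_pos hA1 hA2
  have hs : 0 < Real.sqrt (lam1 * lam2) := Real.sqrt_pos.2 hL
  have ht : 0 < Real.sqrt (A1 * A2) := Real.sqrt_pos.2 hA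
  have hs2 : Real.sqrt (lam1 * lam2) ^ 2 = lam1 * lam2 := Real.sq_sqrt hL.le
  have ht2 : Real.sqrt (A1 * A2) ^ 2 = A1 * A2 := Real.sq_sqrt hA.le
  have hsum : 0 < lam1 + lam2 := by linarith
  generalize Real.sqrt (lam1 * lam2) = s at *
  generalize Real.sqrt (A1 * A2) = t at *
  -- the product of the volatilities is determined by the first two equations
  have key : ∀ a b : ℝ, 0 ≤ a → 0 ≤ b → a ^ 2 * kap1 ^ 2 / lam1 = A1 →
      b ^ 2 * kap2 ^ 2 / lam2 = A2 → a * b * kap1 * kap2 = s * t := by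
    intro a b ha hb e1 e2
    rw [div_eq_iff h1.ne'] at e1
    rw [div_eq_iff hl2.ne'] at e2
    have hp : 0 ≤ a * b * kap1 * kap2 := by positivity
    have hq : 0 ≤ s * t := by positivity
    refine (sq_eq_sq₀ hp hq).1 ?_
    calc (a * b * kap1 * kap2) ^ 2 = (a ^ 2 * kap1 ^ 2) * (b ^ 2 * kap2 ^ 2) := by ring
      _ = (lam1 * lam2) * (A1 * A2) := by rw [e1, e2]; ring
      _ = (s * t) ^ 2 := by rw [← hs2, ← ht2]; ring
  constructor
  · rintro ⟨a, b, rho, z1, z2, ha, hb, hr, e1, e2, e3, -, -⟩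
    have k := key a b ha hb e1 e2
    have e : s / (lam1 + lam2) * C / t = rho := by
      have : rho * (lam1 + lam2) * a * b * kap1 * kap2
          = rho * (lam1 + lam2) * (s * t) := by rw [← k]; ring
      rw [← e3, this, ← hs2]
      field_simp
    rw [e]; exact hr
  · intro hr
    have f1 : (Real.sqrt (A1 * lam1) / kap1) ^ 2 * kap1 ^ 2 / lam1 = A1 := by
      rw [div_pow, Real.sq_sqrt (by positivity)]
      field_simp
    have f2 : (Real.sqrt (A2 * lam2) / kap2) ^ 2 * kap2 ^ 2 / lam2 = A2 := by
      rw [div_pow, Real.sq_sqrt (by positivity)]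
      field_simp
    have g1 : 0 ≤ Real.sqrt (A1 * lam1) / kap1 := by positivity
    have g2 : 0 ≤ Real.sqrt (A2 * lam2) / kap2 := by positivity
    generalize Real.sqrt (A1 * lam1) / kap1 = a at *
    generalize Real.sqrt (A2 * lam2) / kap2 = b at *
    have k := key a b g1 g2 f1 f2
    have hC : s / (lam1 + lam2) * C / t * (lam1 + lam2) * a * b * kap1 * kap2
        / (lam1 * lam2) = C := by
      have : s / (lam1 + lam2) * C / t * (lam1 + lam2) * a * b * kap1 * kap2
          = s / (lam1 + lam2) * C / t * (lam1 + lam2) * (s * t) := by rw [← k]; ring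
      rw [this, ← hs2]
      field_simp
    generalize s / (lam1 + lam2) * C / t = rho at *
    refine ⟨a, b, rho,
      th1 - (W1 + A1 + rho * lam1 * a * b * kap1 * kap2 / (lam1 * lam2)) / (kap1 * lam1),
      th2 - (W2 + A2 + rho * lam2 * a * b * kap1 * kap2 / (lam1 * lam2)) / (kap2 * lam2),
      g1, g2, hr, f1, f2, hC, ?_, ?_⟩
    · rw [f1, sub_sub_cancel, mul_div_cancel₀ _ (mul_pos hkap1 h1).ne']
      ring
    · rw [f2, sub_sub_cancel, mul_div_cancel₀ _ (mul_pos hkap2 hl2).ne']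
      ring
end

section
/- Let 0 < λ₁ < λ₂ < 2λ₁ and set (β₁, β₂, β₃, β₄) := (2λ₂, λ₁+λ₂, 2λ₁, λ₂). For 0 < r₁ < r₂ < r₃ and i ∈ {1,2,3,4}, define aᵢ(r) := (−1)^{1+i}·det M⁽ⁱ⁾, where M⁽ⁱ⁾ is the 3×3 matrix whose (k, l) entry is exp(−β_{j_l}·r_k) with j₁ < j₂ < j₃ the elements of {1,2,3,4}\{i} in increasing order. Then: (a) for every such r, (−1)^{1+i}·aᵢ(r) > 0 for each i (in particular a₁(r) > 0, a₂(r) < 0, a₃(r) > 0, a₄(r) < 0); and (b) there exists δ > 0 such that for all r with 0 < r₁ < r₂ < r₃ < δ, a₂(r)² < 4·a₁(r)·a₃(r). -/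
/-- Chebyshev slope form for exponentials. -/
lemma slope_exp (p q : ℝ) (hq : 0 < q) (u v : ℝ) (huv : u < v) :
    ∃ c, u < c ∧ c < v ∧ Real.exp (-(p * v)) - Real.exp (-(p * u)) =
      (Real.exp (-(q * v)) - Real.exp (-(q * u))) * (p / q * Real.exp (-((p - q) * c))) := by
  have hd : ∀ b x : ℝ, HasDerivAt (fun x => Real.exp (-(b * x)))
      (Real.exp (-(b * x)) * (-b)) x := by
    intro b x
    have h := ((hasDerivAt_id x).const_mul b).neg.exp
    simpa using h
  obtain ⟨c, hc, h⟩ := exists_ratio_hasDerivAt_eq_ratio_slope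
    (fun x => Real.exp (-(p * x))) (fun x => Real.exp (-(p * x)) * (-p)) huv
    (by fun_prop) (fun x _ => hd p x)
    (fun x => Real.exp (-(q * x))) (fun x => Real.exp (-(q * x)) * (-q))
    (by fun_prop) (fun x _ => hd q x)
  refine ⟨c, hc.1, hc.2, ?_⟩
  have hE : Real.exp (-(p * c)) = Real.exp (-((p - q) * c)) * Real.exp (-(q * c)) := by
    rw [← Real.exp_add]; congr 1; ring
  simp only [hE] at h
  have hpos := Real.exp_pos (-(q * c))
  have h' : (Real.exp (-(p * v)) - Real.exp (-(p * u))) * q =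
      (Real.exp (-(q * v)) - Real.exp (-(q * u))) * (p * Real.exp (-((p - q) * c))) := by
    apply mul_right_cancel₀ hpos.ne'
    linarith
  rw [div_mul_eq_mul_div, ← mul_div_assoc, eq_div_iff hq.ne']
  exact h'

lemma det_pos2 (p q : ℝ) (hq : 0 < q) (hpq : q < p) (r : Fin 3 → ℝ) (hr : StrictMono r) :
    0 < (Real.exp (-(p * r 1)) - Real.exp (-(p * r 0))) *
        (Real.exp (-(q * r 2)) - Real.exp (-(q * r 1))) -
      (Real.exp (-(p * r 2)) - Real.exp (-(p * r 1))) *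
        (Real.exp (-(q * r 1)) - Real.exp (-(q * r 0))) := by
  have h01 : r 0 < r 1 := hr (by decide)
  have h12 : r 1 < r 2 := hr (by decide)
  obtain ⟨c, _, hc, h⟩ := slope_exp p q hq _ _ h01
  obtain ⟨d, hd, _, h'⟩ := slope_exp p q hq _ _ h12
  rw [h, h']
  have e1 : Real.exp (-(q * r 1)) - Real.exp (-(q * r 0)) < 0 := by
    rw [sub_neg, Real.exp_lt_exp]; nlinarith
  have e2 : Real.exp (-(q * r 2)) - Real.exp (-(q * r 1)) < 0 := by
    rw [sub_neg, Real.exp_lt_exp]; nlinarith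
  have e3 : 0 < Real.exp (-((p - q) * c)) - Real.exp (-((p - q) * d)) := by
    rw [sub_pos, Real.exp_lt_exp]
    have := mul_pos (sub_pos.2 hpq) (sub_pos.2 (hc.trans hd))
    linarith
  have e4 : 0 < p / q := div_pos (hq.trans hpq) hq
  have := mul_pos (mul_pos (mul_pos_of_neg_of_neg e1 e2) e4) e3
  linarith

lemma det_pos3 (b : Fin 3 → ℝ) (h01 : b 1 < b 0) (h12 : b 2 < b 1)
    (r : Fin 3 → ℝ) (hr : StrictMono r) :
    0 < (Matrix.of fun k l : Fin 3 => Real.exp (-(b l * r k))).det := by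
  have h := det_pos2 (b 0 - b 2) (b 1 - b 2) (by linarith) (by linarith) r hr
  have hE : ∀ i k : Fin 3, Real.exp (-(b i * r k)) =
      Real.exp (-((b i - b 2) * r k)) * Real.exp (-(b 2 * r k)) := by
    intro i k; rw [← Real.exp_add]; congr 1; ring
  have hP := mul_pos (mul_pos (mul_pos (Real.exp_pos (-(b 2 * r 0)))
    (Real.exp_pos (-(b 2 * r 1)))) (Real.exp_pos (-(b 2 * r 2)))) h
  rw [Matrix.det_fin_three]
  simp only [Matrix.of_apply]
  rw [hE 0 0, hE 0 1, hE 0 2, hE 1 0, hE 1 1, hE 1 2]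
  linarith

/-- Newton form with mean-value remainders. -/
lemma newton_exp (b u v w : ℝ) (huv : u < v) (hvw : v < w) :
    ∃ x y, u < x ∧ x < w ∧ u < y ∧ y < w ∧
      Real.exp (-(b * v)) = Real.exp (-(b * u)) + (v - u) * (-b * Real.exp (-(b * x))) ∧
      Real.exp (-(b * w)) = Real.exp (-(b * u)) + (w - u) * (-b * Real.exp (-(b * x))) +
        (w - u) * (w - v) * (b ^ 2 / 2 * Real.exp (-(b * y))) := by
  have hd : ∀ b x : ℝ, HasDerivAt (fun x => Real.exp (-(b * x)))
      (-b * Real.exp (-(b * x))) x := by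
    intro b x
    have h := ((hasDerivAt_id x).const_mul b).neg.exp
    simpa [mul_comm] using h
  obtain ⟨x, hx, h⟩ := exists_hasDerivAt_eq_slope
    (fun x => Real.exp (-(b * x))) (fun x => -b * Real.exp (-(b * x))) huv
    (by fun_prop) (fun x _ => hd b x)
  obtain ⟨m, hm⟩ : ∃ m, m = -b * Real.exp (-(b * x)) := ⟨_, rfl⟩
  rw [← hm] at h
  have hv : Real.exp (-(b * v)) = Real.exp (-(b * u)) + (v - u) * m := by
    have : v - u ≠ 0 := by linarith
    field_simp at h
    linarith
  have hne : (w - u) * (w - v) ≠ 0 := (mul_pos (by linarith) (by linarith)).ne'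
  obtain ⟨k, hk⟩ : ∃ k, Real.exp (-(b * w)) = Real.exp (-(b * u)) + (w - u) * m +
      (w - u) * (w - v) * k :=
    ⟨(Real.exp (-(b * w)) - Real.exp (-(b * u)) - (w - u) * m) / ((w - u) * (w - v)), by
      rw [mul_div_cancel₀ _ hne]; ring⟩
  have hg : ∀ t, HasDerivAt (fun t => Real.exp (-(b * t)) - Real.exp (-(b * u)) - (t - u) * m -
      (t - u) * (t - v) * k) (-b * Real.exp (-(b * t)) - m - ((t - v) + (t - u)) * k) t := by
    intro t
    have h1 := (hasDerivAt_id t).sub_const u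
    have h2 := (hasDerivAt_id t).sub_const v
    have := (((hd b t).sub_const (Real.exp (-(b * u)))).sub (h1.mul_const m)).sub
      ((h1.mul h2).mul_const k)
    exact HasDerivAt.congr_deriv this (by simp only [id]; ring)
  have hg2 : ∀ t, HasDerivAt (fun t => -b * Real.exp (-(b * t)) - m - ((t - v) + (t - u)) * k)
      (-b * (-b * Real.exp (-(b * t))) - 2 * k) t := by
    intro t
    have h1 := (hasDerivAt_id t).sub_const u
    have h2 := (hasDerivAt_id t).sub_const v
    have := (((hd b t).const_mul (-b)).sub_const m).sub ((h2.add h1).mul_const k)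
    exact HasDerivAt.congr_deriv this (by ring)
  obtain ⟨c, hc, hc0⟩ := exists_hasDerivAt_eq_zero huv
    (fun t _ => (hg t).continuousAt.continuousWithinAt)
    (by simp only [hv]; ring) (fun t _ => hg t)
  obtain ⟨d, hd', hd0⟩ := exists_hasDerivAt_eq_zero hvw
    (fun t _ => (hg t).continuousAt.continuousWithinAt)
    (by simp only [hv, hk]; ring) (fun t _ => hg t)
  obtain ⟨y, hy, hy0⟩ := exists_hasDerivAt_eq_zero (hc.2.trans hd'.1)
    (fun t _ => (hg2 t).continuousAt.continuousWithinAt)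
    (by simp only [hc0, hd0]) (fun t _ => hg2 t)
  refine ⟨x, y, hx.1, hx.2.trans hvw, hc.1.trans hy.1, hy.2.trans hd'.2, ?_, ?_⟩
  · rw [← hm]; exact hv
  · rw [← hm, hk]
    have : k = b ^ 2 / 2 * Real.exp (-(b * y)) := by linarith
    rw [this]

/-- 3x3 determinant with columns `i, j, k`. -/
def D3 (X Y Z : Fin 4 → ℝ) (i j k : Fin 4) : ℝ :=
  X i * (Y j * Z k - Y k * Z j) - X j * (Y i * Z k - Y k * Z i) + X k * (Y i * Z j - Y j * Z i)

lemma near_zero (β : Fin 4 → ℝ)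
    (h0 : D3 (fun _ => 1) (fun i => -β i) (fun i => β i ^ 2 / 2) 0 2 3 ^ 2 <
      4 * D3 (fun _ => 1) (fun i => -β i) (fun i => β i ^ 2 / 2) 1 2 3 *
        D3 (fun _ => 1) (fun i => -β i) (fun i => β i ^ 2 / 2) 0 1 3) :
    ∃ δ : ℝ, 0 < δ ∧ ∀ (t : ℝ) (x y : Fin 4 → ℝ), |t| < δ → (∀ i, |x i| < δ) →
      (∀ i, |y i| < δ) → ∀ X Y Z : Fin 4 → ℝ, (∀ i, X i = Real.exp (-(β i * t))) →
      (∀ i, Y i = -β i * Real.exp (-(β i * x i))) →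
      (∀ i, Z i = β i ^ 2 / 2 * Real.exp (-(β i * y i))) →
      D3 X Y Z 0 2 3 ^ 2 < 4 * D3 X Y Z 1 2 3 * D3 X Y Z 0 1 3 := by
  let G : ℝ × (Fin 4 → ℝ) × (Fin 4 → ℝ) → Fin 4 → Fin 4 → Fin 4 → ℝ := fun s =>
    D3 (fun i => Real.exp (-(β i * s.1))) (fun i => -β i * Real.exp (-(β i * s.2.1 i)))
      (fun i => β i ^ 2 / 2 * Real.exp (-(β i * s.2.2 i)))
  have hG : ∀ i j k, Continuous fun s => G s i j k := by
    intro i j k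
    simp only [G, D3]
    fun_prop
  have hopen : IsOpen {s | G s 0 2 3 ^ 2 < 4 * G s 1 2 3 * G s 0 1 3} :=
    isOpen_lt ((hG _ _ _).pow 2) ((continuous_const.mul (hG _ _ _)).mul (hG _ _ _))
  have hmem : (0 : ℝ × (Fin 4 → ℝ) × (Fin 4 → ℝ)) ∈
      {s | G s 0 2 3 ^ 2 < 4 * G s 1 2 3 * G s 0 1 3} := by
    simpa [G] using h0
  obtain ⟨δ, hδ, hb⟩ := Metric.isOpen_iff.1 hopen _ hmem
  refine ⟨δ, hδ, ?_⟩
  intro t x y ht hx hy X Y Z hX hY hZ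
  obtain rfl : X = _ := funext hX
  obtain rfl : Y = _ := funext hY
  obtain rfl : Z = _ := funext hZ
  have : (t, x, y) ∈ Metric.ball (0 : ℝ × (Fin 4 → ℝ) × (Fin 4 → ℝ)) δ := by
    rw [mem_ball_zero_iff, Prod.norm_def, Prod.norm_def]
    refine max_lt ht (max_lt ?_ ?_)
    · exact (pi_norm_lt_iff hδ).2 hx
    · exact (pi_norm_lt_iff hδ).2 hy
  exact hb this

/-- Coefficients of the interpolating exponential polynomial for the Descartes
system `(e^{−2λ₂x}, e^{−(λ₁+λ₂)x}, e^{−2λ₁x}, e^{−λ₂x})` in the scale-proximal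
case `λ₁ < λ₂ < 2λ₁`.  Here indices are zero-based: `a r i` corresponds to
`a_{i+1}(r) = (−1)^{1+(i+1)} det M^{(i+1)} = (−1)^i det M^{(i+1)}`, where the
columns of `M^{(i+1)}` use the exponents `β_j` for `j ≠ i` in increasing order
(`Fin.succAbove`).  (a) The coefficients strictly alternate in sign starting
with `+`; (b) near the origin, `a₂(r)² < 4·a₁(r)·a₃(r)`. -/
theorem interpolation_coefficients_prox (lam1 lam2 : ℝ)
    (h1 : 0 < lam1) (h2 : lam1 < lam2) (h3 : lam2 < 2 * lam1)
    (β : Fin 4 → ℝ) (hβ : β = ![2 * lam2, lam1 + lam2, 2 * lam1, lam2])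
    (a : (Fin 3 → ℝ) → Fin 4 → ℝ)
    (ha : ∀ (r : Fin 3 → ℝ) (i : Fin 4), a r i = (-1 : ℝ) ^ (i : ℕ) *
      (Matrix.of fun k l : Fin 3 =>
        Real.exp (-(β (i.succAbove l) * r k))).det) :
    (∀ r : Fin 3 → ℝ, (∀ k, 0 < r k) → StrictMono r →
      ∀ i : Fin 4, 0 < (-1 : ℝ) ^ (i : ℕ) * a r i) ∧
    (∃ δ : ℝ, 0 < δ ∧ ∀ r : Fin 3 → ℝ, (∀ k, 0 < r k) → StrictMono r →
      (∀ k, r k < δ) → (a r 1) ^ 2 < 4 * a r 0 * a r 2) := by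
  have hdec : ∀ i j : Fin 4, i < j → β j < β i := by
    intro i j hij
    subst hβ
    fin_cases i <;> fin_cases j <;> first | (exact absurd hij (by decide)) | (simp; linarith)
  constructor
  · intro r _ hr i
    have hp : ((-1 : ℝ) ^ (i : ℕ)) * (-1) ^ (i : ℕ) = 1 := by
      rw [← mul_pow]; simp
    rw [ha, ← mul_assoc, hp, one_mul]
    exact det_pos3 (fun l => β (i.succAbove l))
      (hdec _ _ (Fin.strictMono_succAbove i (by decide)))
      (hdec _ _ (Fin.strictMono_succAbove i (by decide))) r hr
  · obtain ⟨δ, hδ, H⟩ := near_zero β (by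
      subst hβ
      simp only [D3, Matrix.cons_val]
      have hd : 0 < lam2 - lam1 := by linarith
      have he : 0 < 2 * lam1 - lam2 := by linarith
      have hl : 0 < lam2 := by linarith
      have := mul_pos (mul_pos (pow_pos hd 4) hl) he
      nlinarith)
    refine ⟨δ, hδ, ?_⟩
    intro r hpos hr hlt
    have h01 : r 0 < r 1 := hr (by decide)
    have h12 : r 1 < r 2 := hr (by decide)
    have p0 := hpos 0
    have l2 := hlt 2
    choose x y hx1 hx2 hy1 hy2 hv hw using fun i => newton_exp (β i) _ _ _ h01 h12
    have K := H (r 0) x y (by rw [abs_lt]; constructor <;> linarith)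
      (fun i => by rw [abs_lt]; constructor <;> linarith [hx1 i, hx2 i])
      (fun i => by rw [abs_lt]; constructor <;> linarith [hy1 i, hy2 i])
      (fun i => Real.exp (-(β i * r 0))) (fun i => -β i * Real.exp (-(β i * x i)))
      (fun i => β i ^ 2 / 2 * Real.exp (-(β i * y i)))
      (fun _ => rfl) (fun _ => rfl) (fun _ => rfl)
    generalize hX : (fun i => Real.exp (-(β i * r 0))) = X at K
    generalize hY : (fun i => -β i * Real.exp (-(β i * x i))) = Y at K
    generalize hZ : (fun i => β i ^ 2 / 2 * Real.exp (-(β i * y i))) = Z at K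
    have hX' : ∀ i, Real.exp (-(β i * r 0)) = X i := congrFun hX
    have hY' : ∀ i, -β i * Real.exp (-(β i * x i)) = Y i := congrFun hY
    have hZ' : ∀ i, β i ^ 2 / 2 * Real.exp (-(β i * y i)) = Z i := congrFun hZ
    simp only [hX', hY', hZ'] at hv hw
    have hdet : ∀ j : Fin 3 → Fin 4,
        (Matrix.of fun k l : Fin 3 => Real.exp (-(β (j l) * r k))).det =
        ((r 1 - r 0) * (r 2 - r 0) * (r 2 - r 1)) * D3 X Y Z (j 0) (j 1) (j 2) := by
      intro j
      rw [Matrix.det_fin_three]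
      simp only [Matrix.of_apply, hX', hv, hw, D3]
      ring
    rw [ha, ha, ha, hdet, hdet, hdet]
    have s00 : (0 : Fin 4).succAbove (0 : Fin 3) = 1 := by decide
    have s01 : (0 : Fin 4).succAbove (1 : Fin 3) = 2 := by decide
    have s02 : (0 : Fin 4).succAbove (2 : Fin 3) = 3 := by decide
    have s10 : (1 : Fin 4).succAbove (0 : Fin 3) = 0 := by decide
    have s11 : (1 : Fin 4).succAbove (1 : Fin 3) = 2 := by decide
    have s12 : (1 : Fin 4).succAbove (2 : Fin 3) = 3 := by decide
    have s20 : (2 : Fin 4).succAbove (0 : Fin 3) = 0 := by decide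
    have s21 : (2 : Fin 4).succAbove (1 : Fin 3) = 1 := by decide
    have s22 : (2 : Fin 4).succAbove (2 : Fin 3) = 3 := by decide
    rw [s00, s01, s02, s10, s11, s12, s20, s21, s22]
    have e0 : ((0 : Fin 4) : ℕ) = 0 := rfl
    have e1 : ((1 : Fin 4) : ℕ) = 1 := rfl
    have e2 : ((2 : Fin 4) : ℕ) = 2 := rfl
    rw [e0, e1, e2]
    have hV : 0 < (r 1 - r 0) * (r 2 - r 0) * (r 2 - r 1) :=
      mul_pos (mul_pos (by linarith) (by linarith)) (by linarith)
    have := mul_pos (pow_pos hV 2) (sub_pos.2 K)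
    linarith
end
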